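/- arXiv:2005.09021 — 8 statements merged into one kernel-verified Lean document; each statement's English description precedes it below -/
import Mathlib

section
/- Let λ̄ = ‖y‖₂ · max_{1≤i≤d} ‖a_i‖₂. If λ > λ̄, then every local minimum x* of the objective F2_λ(x) = (1/2)‖Ax − y‖₂² + λ τ_k(x) is k-sparse. -/
open Finset Filter Topology

/-- Euclidean (ℓ₂) norm of a vector in ℝ^m. -/
noncomputable def l2norm {m : ℕ} (v : Fin m → ℝ) : ℝ := Real.sqrt (∑ i, v i ^ 2)

/-- The trimmed lasso penalty: the minimum, over index sets Λ of size d − k,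
of the ℓ₁ norm of x restricted to Λ. -/
noncomputable def tauTL {d : ℕ} (k : ℕ) (x : Fin d → ℝ) : ℝ :=
  sInf ((fun Λ : Finset (Fin d) => ∑ i ∈ Λ, |x i|) '' {Λ : Finset (Fin d) | Λ.card = d - k})

theorem l2norm_nonneg {m : ℕ} (v : Fin m → ℝ) : 0 ≤ l2norm v := Real.sqrt_nonneg _

theorem l2norm_sq {m : ℕ} (v : Fin m → ℝ) : l2norm v ^ 2 = v ⬝ᵥ v := by
  rw [l2norm, Real.sq_sqrt (Finset.sum_nonneg fun i _ => sq_nonneg _)]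
  simp only [dotProduct, sq]

/-- The Cauchy–Schwarz inequality for `l2norm`. -/
theorem abs_dotProduct_le_l2norm_mul {m : ℕ} (u v : Fin m → ℝ) :
    |u ⬝ᵥ v| ≤ l2norm u * l2norm v := by
  refine abs_le_of_sq_le_sq ?_ (mul_nonneg (l2norm_nonneg u) (l2norm_nonneg v))
  rw [mul_pow, l2norm_sq, l2norm_sq]
  simpa only [dotProduct, sq] using Finset.sum_mul_sq_le_sq_mul_sq Finset.univ u v

theorem tauTL_le {d k : ℕ} (x : Fin d → ℝ) {Λ : Finset (Fin d)} (hΛ : Λ.card = d - k) :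
    tauTL k x ≤ ∑ i ∈ Λ, |x i| :=
  csInf_le ((Set.toFinite _).image _).bddBelow ⟨Λ, hΛ, rfl⟩

theorem exists_tauTL_eq {d : ℕ} (k : ℕ) (x : Fin d → ℝ) :
    ∃ Λ : Finset (Fin d), Λ.card = d - k ∧ tauTL k x = ∑ i ∈ Λ, |x i| := by
  obtain ⟨Λ₀, -, hΛ₀⟩ :=
    Finset.exists_subset_card_eq (s := (Finset.univ : Finset (Fin d))) (n := d - k) (by simp)
  have hne : ((fun Λ : Finset (Fin d) => ∑ i ∈ Λ, |x i|) ''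
      {Λ : Finset (Fin d) | Λ.card = d - k}).Nonempty := ⟨_, Λ₀, hΛ₀, rfl⟩
  obtain ⟨Λ, hΛ, h⟩ := hne.csInf_mem ((Set.toFinite _).image _)
  exact ⟨Λ, hΛ, h.symm⟩

theorem nonneg_of_eventually_nonneg_mul_add_sq {a b : ℝ}
    (h : ∀ᶠ t in 𝓝[>] (0 : ℝ), 0 ≤ t * a + t ^ 2 * b) : 0 ≤ a := by
  have hlim : Tendsto (fun t : ℝ => a + t * b) (𝓝[>] 0) (𝓝 a) := by
    have hc : Continuous fun t : ℝ => a + t * b := by fun_prop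
    simpa using (hc.tendsto 0).mono_left nhdsWithin_le_nhds
  refine ge_of_tendsto hlim ?_
  filter_upwards [h, self_mem_nhdsWithin] with t ht ht0
  refine (mul_nonneg_iff_of_pos_left (Set.mem_Ioi.1 ht0)).1 ?_
  linarith [show t * (a + t * b) = t * a + t ^ 2 * b by ring]

/-- First-order condition at a local minimum in a direction that shrinks each coordinate
`x i` at rate `c i`, where `Λ` attains the minimum in `tauTL k x`. -/
theorem IsLocalMin.trimmedLasso_shrink_le {n d k : ℕ} {A : Matrix (Fin n) (Fin d) ℝ}
    {y : Fin n → ℝ} {lam : ℝ} (hlam : 0 ≤ lam) {x : Fin d → ℝ}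
    (hmin : IsLocalMin
      (fun x : Fin d → ℝ =>
        (1 / 2) * (l2norm (A.mulVec x - y)) ^ 2 + lam * tauTL k x) x)
    {Λ : Finset (Fin d)} (hΛ : Λ.card = d - k) (hx : tauTL k x = ∑ i ∈ Λ, |x i|)
    (c : Fin d → ℝ) (hc : ∀ i, c i ≤ 1) :
    lam * ∑ i ∈ Λ, c i * |x i| ≤ -((A.mulVec x - y) ⬝ᵥ A.mulVec (c * x)) := by
  set r := A.mulVec x - y with hr
  set w := A.mulVec (c * x) with hw
  have hlim : Tendsto (fun t : ℝ => x - t • (c * x)) (𝓝[>] 0) (𝓝 x) := by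
    have hcont : Continuous fun t : ℝ => x - t • (c * x) := by fun_prop
    simpa using (hcont.tendsto 0).mono_left nhdsWithin_le_nhds
  suffices h : 0 ≤ -(r ⬝ᵥ w) - lam * ∑ i ∈ Λ, c i * |x i| by linarith
  refine nonneg_of_eventually_nonneg_mul_add_sq (b := (1 / 2) * (w ⬝ᵥ w)) ?_
  filter_upwards [hlim.eventually hmin, Ioo_mem_nhdsGT (zero_lt_one' ℝ)] with t ht ht01
  have hres : A.mulVec (x - t • (c * x)) - y = r - t • w := by
    rw [Matrix.mulVec_sub, Matrix.mulVec_smul, hr, hw]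
    abel
  have hsum : ∑ i ∈ Λ, |(x - t • (c * x)) i| =
      ∑ i ∈ Λ, |x i| - t * ∑ i ∈ Λ, c i * |x i| := by
    rw [Finset.mul_sum, ← Finset.sum_sub_distrib]
    refine Finset.sum_congr rfl fun i _ => ?_
    have hfac : (x - t • (c * x)) i = (1 - t * c i) * x i := by
      simp only [Pi.sub_apply, Pi.smul_apply, Pi.mul_apply, smul_eq_mul]
      ring
    have hpos : 0 ≤ 1 - t * c i := by
      nlinarith [mul_le_mul_of_nonneg_left (hc i) ht01.1.le, ht01.2]
    rw [hfac, abs_mul, abs_of_nonneg hpos]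
    ring
  have htau := mul_le_mul_of_nonneg_left (tauTL_le (x - t • (c * x)) hΛ) hlam
  rw [hsum] at htau
  simp only [hres, l2norm_sq, hx, ← hr] at ht
  have hexp : (r - t • w) ⬝ᵥ (r - t • w) =
      r ⬝ᵥ r - 2 * t * (r ⬝ᵥ w) + t ^ 2 * (w ⬝ᵥ w) := by
    simp only [sub_dotProduct, dotProduct_sub, smul_dotProduct, dotProduct_smul, smul_eq_mul,
      dotProduct_comm w r]
    ring
  rw [hexp] at ht
  linarith

/-- If λ > λ̄ = ‖y‖₂ · maxᵢ ‖aᵢ‖₂, then every local minimum of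
F2_λ(x) = (1/2)‖Ax − y‖₂² + λ τ_k(x) is k-sparse. -/
theorem stmt0 {n d : ℕ} (k : ℕ) (hk : 0 < k) (hkd : k < d)
    (A : Matrix (Fin n) (Fin d) ℝ) (y : Fin n → ℝ) (lam : ℝ)
    (hlam : l2norm y * (⨆ i : Fin d, l2norm (fun j => A j i)) < lam)
    (xstar : Fin d → ℝ)
    (hmin : IsLocalMin
      (fun x : Fin d → ℝ =>
        (1 / 2) * (l2norm (A.mulVec x - y)) ^ 2 + lam * tauTL k x) xstar) :
    Set.ncard {i : Fin d | xstar i ≠ 0} ≤ k := by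
  have hbdd : BddAbove (Set.range fun i : Fin d => l2norm fun j => A j i) :=
    (Set.finite_range _).bddAbove
  have hlam0 : 0 < lam :=
    (mul_nonneg (l2norm_nonneg y) (Real.iSup_nonneg fun _ => l2norm_nonneg _)).trans_lt hlam
  obtain ⟨Λ, hΛ, hx⟩ := exists_tauTL_eq k xstar
  set r := A.mulVec xstar - y with hr
  have hry : l2norm r ≤ l2norm y := by
    have hshrink := hmin.trimmedLasso_shrink_le hlam0.le hΛ hx 1 fun _ => le_rfl
    rw [one_mul, ← hr] at hshrink
    have hpen : 0 ≤ lam * ∑ i ∈ Λ, (1 : Fin d → ℝ) i * |xstar i| :=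
      mul_nonneg hlam0.le (Finset.sum_nonneg fun i _ => by simp)
    have hrr : r ⬝ᵥ r = r ⬝ᵥ A.mulVec xstar - r ⬝ᵥ y := by
      rw [← dotProduct_sub]
    have hcs := neg_le_of_abs_le (abs_dotProduct_le_l2norm_mul r y)
    rw [← l2norm_sq] at hrr
    by_contra! hlt
    nlinarith [l2norm_nonneg y]
  have hzero : ∀ j ∈ Λ, xstar j = 0 := by
    intro j hj
    by_contra hne
    have hshrink := hmin.trimmedLasso_shrink_le hlam0.le hΛ hx (Pi.single j 1) fun i => by
      by_cases h : i = j <;> simp [h]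
    have hdir : A.mulVec (Pi.single j 1 * xstar) = xstar j • fun i => A i j := by
      have hsingle : Pi.single j 1 * xstar = Pi.single j (xstar j) := by
        rw [← Pi.single_mul_left, one_mul]
      rw [hsingle, Matrix.mulVec_single]
      ext i
      simp [mul_comm]
    have hsum : ∑ i ∈ Λ, (Pi.single j 1 : Fin d → ℝ) i * |xstar i| = |xstar j| := by
      simp [Pi.single_apply, hj]
    rw [hdir, hsum, dotProduct_smul, smul_eq_mul, ← hr] at hshrink
    have habs : lam * |xstar j| ≤ |r ⬝ᵥ fun i => A i j| * |xstar j| :=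
      hshrink.trans ((neg_le_abs _).trans_eq (by rw [abs_mul, mul_comm]))
    have hle := le_of_mul_le_mul_right habs (abs_pos.2 hne)
    have hcol : l2norm r * l2norm (fun i => A i j) ≤
        l2norm y * ⨆ i : Fin d, l2norm fun j => A j i :=
      mul_le_mul hry (le_ciSup hbdd j) (l2norm_nonneg _) (l2norm_nonneg _)
    linarith [abs_dotProduct_le_l2norm_mul r fun i => A i j]
  have hsub : {i : Fin d | xstar i ≠ 0} ⊆ ((Λᶜ : Finset (Fin d)) : Set (Fin d)) := by
    intro i hi
    simpa using fun h => hi (hzero i h)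
  refine (Set.ncard_le_ncard hsub).trans ?_
  rw [Set.ncard_coe_finset, Finset.card_compl, Fintype.card_fin, hΛ]
  omega
end

section
/- Suppose d ≥ n and the n × d matrix A has full rank n, so that its n-th largest singular value σ_n(A) is positive. If 0 < λ < σ_n(A)/√(d−k), then every local minimum x* of the objective F1_λ(x) = ‖Ax − y‖₂ + λ τ_k(x) satisfies A x* = y. -/
open Finset Filter Topology

/-- The n-th (smallest) singular value of an n × d matrix A (n ≤ d):
the infimum of ‖Aᵀu‖₂ over unit vectors u ∈ ℝⁿ. -/
noncomputable def sigmaN {n d : ℕ} (A : Matrix (Fin n) (Fin d) ℝ) : ℝ :=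
  sInf {r : ℝ | ∃ u : Fin n → ℝ, l2norm u = 1 ∧ r = l2norm (Matrix.vecMul u A)}

theorem l2norm_smul {m : ℕ} (c : ℝ) (v : Fin m → ℝ) : l2norm (c • v) = |c| * l2norm v := by
  simp only [l2norm, Pi.smul_apply, smul_eq_mul, mul_pow]
  rw [← Finset.mul_sum, Real.sqrt_mul (sq_nonneg c), Real.sqrt_sq_eq_abs]

theorem l2norm_pos {m : ℕ} {v : Fin m → ℝ} (hv : v ≠ 0) : 0 < l2norm v := by
  refine (l2norm_nonneg v).lt_of_ne fun h => hv ?_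
  rw [← dotProduct_self_eq_zero, ← l2norm_sq, ← h]
  norm_num

theorem sigmaN_mul_l2norm_le {n d : ℕ} (A : Matrix (Fin n) (Fin d) ℝ) {u : Fin n → ℝ}
    (hu : u ≠ 0) : sigmaN A * l2norm u ≤ l2norm (Matrix.vecMul u A) := by
  have hpos := l2norm_pos hu
  have hle : sigmaN A ≤ l2norm (Matrix.vecMul ((l2norm u)⁻¹ • u) A) := by
    refine csInf_le ⟨0, ?_⟩ ⟨_, ?_, rfl⟩
    · rintro r ⟨v, -, rfl⟩
      exact l2norm_nonneg _
    · rw [l2norm_smul, abs_of_pos (inv_pos.2 hpos), inv_mul_cancel₀ hpos.ne']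
  rw [Matrix.smul_vecMul, l2norm_smul, abs_of_pos (inv_pos.2 hpos)] at hle
  calc sigmaN A * l2norm u
      ≤ ((l2norm u)⁻¹ * l2norm (Matrix.vecMul u A)) * l2norm u := by gcongr
    _ = l2norm (Matrix.vecMul u A) := by field_simp

theorem sum_abs_le_sqrt_card_mul_l2norm {m : ℕ} (s : Finset (Fin m)) (v : Fin m → ℝ) :
    ∑ i ∈ s, |v i| ≤ √(s.card : ℝ) * l2norm v := by
  rw [l2norm, ← Real.sqrt_mul (Nat.cast_nonneg _)]
  refine Real.le_sqrt_of_sq_le (sq_sum_le_card_mul_sum_sq.trans ?_)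
  simp only [sq_abs]
  gcongr
  exact Finset.subset_univ s

theorem tauTL_sub_le {d k : ℕ} (hk : k ≤ d) (x v : Fin d → ℝ) :
    tauTL k (x - v) ≤ tauTL k x + √((d : ℝ) - k) * l2norm v := by
  have hne : ((fun Λ : Finset (Fin d) => ∑ i ∈ Λ, |x i|) ''
      {Λ : Finset (Fin d) | Λ.card = d - k}).Nonempty := by
    obtain ⟨Λ, -, hΛ⟩ := Finset.exists_subset_card_eq
      (show d - k ≤ (Finset.univ : Finset (Fin d)).card by simp)
    exact ⟨_, Λ, hΛ, rfl⟩
  obtain ⟨Λ, hΛ, hmin⟩ := hne.csInf_mem (Set.toFinite _)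
  have hΛ' : Λ.card = d - k := hΛ
  have hbdd : tauTL k (x - v) ≤ ∑ i ∈ Λ, |(x - v) i| :=
    csInf_le (Set.toFinite _).bddBelow ⟨Λ, hΛ, rfl⟩
  have hv := sum_abs_le_sqrt_card_mul_l2norm Λ v
  rw [hΛ', Nat.cast_sub hk] at hv
  calc tauTL k (x - v) ≤ ∑ i ∈ Λ, |(x - v) i| := hbdd
    _ ≤ ∑ i ∈ Λ, (|x i| + |v i|) := Finset.sum_le_sum fun i _ => abs_sub (x i) (v i)
    _ = tauTL k x + ∑ i ∈ Λ, |v i| := by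
        rw [Finset.sum_add_distrib]
        exact congrArg (· + _) hmin
    _ ≤ _ := by gcongr

theorem l2norm_residual_sub_smul_sq {n d : ℕ} (A : Matrix (Fin n) (Fin d) ℝ) (x : Fin d → ℝ)
    (y : Fin n → ℝ) (t : ℝ) (w : Fin d → ℝ) :
    l2norm (A.mulVec (x - t • w) - y) ^ 2 = l2norm (A.mulVec x - y) ^ 2
      - 2 * t * (Matrix.vecMul (A.mulVec x - y) A ⬝ᵥ w) + t ^ 2 * l2norm (A.mulVec w) ^ 2 := by
  have h : A.mulVec (x - t • w) - y = (A.mulVec x - y) - t • A.mulVec w := by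
    rw [Matrix.mulVec_sub, Matrix.mulVec_smul]
    abel
  rw [h, ← Matrix.dotProduct_mulVec]
  generalize A.mulVec x - y = r
  simp only [l2norm_sq, sub_dotProduct, dotProduct_sub, smul_dotProduct, dotProduct_smul,
    smul_eq_mul, dotProduct_comm (A.mulVec w) r]
  ring

/-- If d ≥ n, A has full rank n, and 0 < λ < σₙ(A)/√(d−k), then every local
minimum x* of F1_λ(x) = ‖Ax − y‖₂ + λ τ_k(x) satisfies A x* = y. -/
theorem stmt2 {n d : ℕ} (k : ℕ) (hk : 0 < k) (hkd : k < d) (hnd : n ≤ d)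
    (A : Matrix (Fin n) (Fin d) ℝ) (hrank : A.rank = n)
    (y : Fin n → ℝ) (lam : ℝ)
    (hlam0 : 0 < lam) (hlam : lam < sigmaN A / Real.sqrt ((d : ℝ) - (k : ℝ)))
    (xstar : Fin d → ℝ)
    (hmin : IsLocalMin
      (fun x : Fin d → ℝ => l2norm (A.mulVec x - y) + lam * tauTL k x) xstar) :
    A.mulVec xstar = y := by
  by_contra hne
  have hr : A.mulVec xstar - y ≠ 0 := sub_ne_zero.2 hne
  set r := A.mulVec xstar - y with hr_def
  set w := Matrix.vecMul r A with hw_def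
  set s := √((d : ℝ) - k)
  have hR : 0 < l2norm r := l2norm_pos hr
  have hs : 0 < s := Real.sqrt_pos.2 (sub_pos.2 (Nat.cast_lt.2 hkd))
  have hσ : lam * s < sigmaN A := (lt_div_iff₀ hs).1 hlam
  have hσw : sigmaN A * l2norm r ≤ l2norm w := sigmaN_mul_l2norm_le A hr
  have hlt : lam * s * l2norm r < l2norm w := (mul_lt_mul_of_pos_right hσ hR).trans_le hσw
  have hw : 0 < l2norm w := lt_of_le_of_lt (by positivity) hlt
  have hsmall : ∀ᶠ t : ℝ in 𝓝[>] 0, 2 * l2norm w ^ 2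
      ≤ 2 * l2norm r * (lam * s * l2norm w) + t * l2norm (A.mulVec w) ^ 2 := by
    have hpath : Tendsto (fun t : ℝ => xstar - t • w) (𝓝[>] 0) (𝓝 xstar) := by
      have hcont : Continuous fun t : ℝ => xstar - t • w := by fun_prop
      simpa using (hcont.tendsto 0).mono_left nhdsWithin_le_nhds
    have hpos : ∀ᶠ t : ℝ in 𝓝[>] 0, t * (lam * s * l2norm w) < l2norm r := by
      have hcont : Continuous fun t : ℝ => t * (lam * s * l2norm w) := by fun_prop
      exact ((hcont.tendsto 0).mono_left nhdsWithin_le_nhds).eventually_lt_const (by simpa using hR)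
    filter_upwards [hpath.eventually hmin, hpos, self_mem_nhdsWithin] with t hmin_t hpos_t ht
    have ht0 : 0 < t := ht
    have hτ := tauTL_sub_le hkd.le xstar (t • w)
    rw [l2norm_smul, abs_of_pos ht0] at hτ
    have hτ' := mul_le_mul_of_nonneg_left hτ hlam0.le
    have hdrop : l2norm r - t * (lam * s * l2norm w) ≤ l2norm (A.mulVec (xstar - t • w) - y) := by
      linarith
    have hsq := pow_le_pow_left₀ (sub_nonneg.2 hpos_t.le) hdrop 2
    rw [l2norm_residual_sub_smul_sq, ← hr_def, ← hw_def, ← l2norm_sq] at hsq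
    refine le_of_mul_le_mul_left ?_ ht0
    nlinarith [sq_nonneg (t * (lam * s * l2norm w))]
  have hlim : 2 * l2norm w ^ 2 ≤ 2 * l2norm r * (lam * s * l2norm w) := by
    have hcont : Continuous fun t : ℝ =>
        2 * l2norm r * (lam * s * l2norm w) + t * l2norm (A.mulVec w) ^ 2 := by fun_prop
    simpa using ge_of_tendsto ((hcont.tendsto 0).mono_left nhdsWithin_le_nhds) hsmall
  nlinarith [mul_lt_mul_of_pos_right hlt hw]
end

section
/- Let y = A x₀ + e for some x₀ ∈ ℝ^d and e ∈ ℝ^n, let β = max_{1≤i≤d} ‖a_i‖₂, and let α_{2k} > 0 satisfy ‖Ax‖₂ ≥ α_{2k} ‖x‖₁ for every x with at most 2k nonzero entries. Let λ > 0 and suppose x̂ ∈ ℝ^d satisfies F1_λ(x̂) ≤ F1_λ(P_k(x₀)), where F1_λ(x) = ‖Ax − y‖₂ + λ τ_k(x). Then ‖P_k(x̂) − x₀‖₁ ≤ τ_k(x₀) + (1/α_{2k})·(1 + max{1, β/λ})·(‖e‖₂ + β τ_k(x₀)). Moreover, if x̂ itself is k-sparse, then ‖x̂ − x₀‖₁ ≤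 (2/α_{2k})‖e‖₂ + (1 + 2β/α_{2k}) τ_k(x₀). -/
open Finset Filter Topology

/-- `p` is a k-sparse vector closest to `x` in ℓ₁ norm (a valid choice of P_k(x)). -/
def IsKSparseProj {d : ℕ} (k : ℕ) (x p : Fin d → ℝ) : Prop :=
  Set.ncard {i : Fin d | p i ≠ 0} ≤ k ∧
  ∀ z : Fin d → ℝ, Set.ncard {i : Fin d | z i ≠ 0} ≤ k →
    (∑ i, |x i - p i|) ≤ ∑ i, |x i - z i|

theorem l2norm_eq_norm {m : ℕ} (v : Fin m → ℝ) : l2norm v = ‖WithLp.toLp 2 v‖ := by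
  simp [l2norm, EuclideanSpace.norm_eq]

theorem l2norm_add_le {m : ℕ} (v w : Fin m → ℝ) : l2norm (v + w) ≤ l2norm v + l2norm w := by
  simp only [l2norm_eq_norm, WithLp.toLp_add]
  exact norm_add_le _ _

theorem l2norm_sub_le {m : ℕ} (v w : Fin m → ℝ) : l2norm (v - w) ≤ l2norm v + l2norm w := by
  simp only [l2norm_eq_norm, WithLp.toLp_sub]
  exact norm_sub_le _ _

theorem l2norm_mulVec_le {n d : ℕ} (A : Matrix (Fin n) (Fin d) ℝ) (x : Fin d → ℝ) :
    l2norm (A.mulVec x) ≤ (⨆ i : Fin d, l2norm (fun j => A j i)) * ∑ i, |x i| := by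
  have hsum : WithLp.toLp 2 (A.mulVec x) = ∑ i, x i • WithLp.toLp 2 (fun j => A j i) := by
    ext j
    simp [Matrix.mulVec, dotProduct, mul_comm]
  rw [l2norm_eq_norm, hsum, Finset.mul_sum]
  refine (norm_sum_le _ _).trans (Finset.sum_le_sum fun i _ => ?_)
  rw [norm_smul, Real.norm_eq_abs, mul_comm, ← l2norm_eq_norm]
  exact mul_le_mul_of_nonneg_right
    (le_ciSup (f := fun i : Fin d => l2norm (fun j => A j i)) (Set.finite_range _).bddAbove i)
    (abs_nonneg _)

theorem tauTL_nonneg {d : ℕ} (k : ℕ) (x : Fin d → ℝ) : 0 ≤ tauTL k x := by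
  apply Real.sInf_nonneg
  rintro _ ⟨Λ, -, rfl⟩
  exact Finset.sum_nonneg fun i _ => abs_nonneg _

theorem tauTL_nonpos_of_sparse {d k : ℕ} {x : Fin d → ℝ}
    (hx : Set.ncard {i : Fin d | x i ≠ 0} ≤ k) : tauTL k x ≤ 0 := by
  classical
  have hcard : d - k ≤ #{i : Fin d | x i = 0} := by
    have hsplit := Finset.card_filter_add_card_filter_not (s := (univ : Finset (Fin d)))
      (fun i => x i = 0)
    have hncard : Set.ncard {i : Fin d | x i ≠ 0} = #{i : Fin d | ¬ x i = 0} := by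
      rw [← Set.ncard_coe_finset]
      simp
    rw [Finset.card_univ, Fintype.card_fin] at hsplit
    omega
  obtain ⟨Λ, hΛ, hΛcard⟩ := Finset.exists_subset_card_eq hcard
  have hle : tauTL k x ≤ ∑ i ∈ Λ, |x i| :=
    csInf_le (Set.toFinite _).bddBelow ⟨Λ, hΛcard, rfl⟩
  refine hle.trans (le_of_eq ?_)
  refine Finset.sum_eq_zero fun i hi => ?_
  simpa using hΛ hi

theorem IsKSparseProj.sum_abs_sub_le_tauTL {d k : ℕ} {x p : Fin d → ℝ}
    (h : IsKSparseProj k x p) : ∑ i, |x i - p i| ≤ tauTL k x := by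
  classical
  have hne : ∃ Λ : Finset (Fin d), #Λ = d - k := by
    obtain ⟨Λ, -, hΛ⟩ := Finset.exists_subset_card_eq
      (s := (univ : Finset (Fin d))) (n := d - k) (by simp)
    exact ⟨Λ, hΛ⟩
  refine le_csInf (Set.Nonempty.image _ hne) ?_
  rintro _ ⟨Λ, hΛ, rfl⟩
  refine (h.2 (fun i => if i ∈ Λ then 0 else x i) ?_).trans (le_of_eq ?_)
  · have hsub : {i : Fin d | (if i ∈ Λ then 0 else x i) ≠ 0} ⊆
        ((Λᶜ : Finset (Fin d)) : Set (Fin d)) := by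
      intro i hi
      by_contra hmem
      simp_all
    refine (Set.ncard_le_ncard hsub).trans ?_
    rw [Set.ncard_coe_finset, Finset.card_compl, Fintype.card_fin, hΛ]
    omega
  · rw [← Finset.sum_subset (Finset.subset_univ Λ) (fun i _ hi => by simp [hi])]
    exact Finset.sum_congr rfl fun i hi => by simp [hi]

theorem ncard_support_sub_le {d : ℕ} (x z : Fin d → ℝ) :
    Set.ncard {i : Fin d | (x - z) i ≠ 0} ≤
      Set.ncard {i : Fin d | x i ≠ 0} + Set.ncard {i : Fin d | z i ≠ 0} := by
  refine (Set.ncard_le_ncard (fun i hi => ?_)).trans (Set.ncard_union_le _ _)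
  by_contra hmem
  simp_all

theorem sum_abs_sub_le_add {ι : Type*} [Fintype ι] (x z w : ι → ℝ) :
    ∑ i, |x i - w i| ≤ ∑ i, |x i - z i| + ∑ i, |w i - z i| := by
  rw [← Finset.sum_add_distrib]
  refine Finset.sum_le_sum fun i _ => ?_
  rw [abs_sub_comm (w i)]
  exact abs_sub_le _ _ _

/-- Sparse recovery guarantee for the power-1 trimmed-lasso objective
F1_λ(x) = ‖Ax − y‖₂ + λ τ_k(x). -/
theorem stmt6 {n d : ℕ} (k : ℕ) (hk : 0 < k) (hkd : k < d)
    (A : Matrix (Fin n) (Fin d) ℝ) (y : Fin n → ℝ)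
    (x0 : Fin d → ℝ) (e : Fin n → ℝ) (hy : y = A.mulVec x0 + e)
    (α : ℝ) (hα : 0 < α)
    (hrip : ∀ x : Fin d → ℝ, Set.ncard {i : Fin d | x i ≠ 0} ≤ 2 * k →
      α * (∑ i, |x i|) ≤ l2norm (A.mulVec x))
    (lam : ℝ) (hlam : 0 < lam)
    (xhat px0 pxhat : Fin d → ℝ)
    (hpx0 : IsKSparseProj k x0 px0) (hpxhat : IsKSparseProj k xhat pxhat)
    (hopt : l2norm (A.mulVec xhat - y) + lam * tauTL k xhat ≤
            l2norm (A.mulVec px0 - y) + lam * tauTL k px0) :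
    ((∑ i, |pxhat i - x0 i|) ≤
      tauTL k x0 +
      (1 / α) * (1 + max 1 ((⨆ i : Fin d, l2norm (fun j => A j i)) / lam)) *
        (l2norm e + (⨆ i : Fin d, l2norm (fun j => A j i)) * tauTL k x0)) ∧
    (Set.ncard {i : Fin d | xhat i ≠ 0} ≤ k →
      (∑ i, |xhat i - x0 i|) ≤
        (2 / α) * l2norm e +
        (1 + 2 * (⨆ i : Fin d, l2norm (fun j => A j i)) / α) * tauTL k x0) := by
  set β : ℝ := ⨆ i : Fin d, l2norm (fun j => A j i)
  set M : ℝ := l2norm e + β * tauTL k x0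
  have hβ : 0 ≤ β := Real.iSup_nonneg fun i => l2norm_nonneg _
  have hx0 : ∑ i, |x0 i - px0 i| ≤ tauTL k x0 := hpx0.sum_abs_sub_le_tauTL
  have hres : l2norm (y - A.mulVec px0) ≤ M := by
    have hsplit : y - A.mulVec px0 = e + A.mulVec (x0 - px0) := by
      rw [hy, Matrix.mulVec_sub]
      abel
    rw [hsplit]
    exact (l2norm_add_le _ _).trans (add_le_add le_rfl
      ((l2norm_mulVec_le A _).trans (mul_le_mul_of_nonneg_left hx0 hβ)))
  have hobj : l2norm (A.mulVec xhat - y) + lam * tauTL k xhat ≤ M := by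
    have hswap : l2norm (A.mulVec px0 - y) = l2norm (y - A.mulVec px0) := by
      simp only [l2norm_eq_norm, WithLp.toLp_sub, norm_sub_rev]
    have hpen : lam * tauTL k px0 ≤ 0 :=
      mul_nonpos_of_nonneg_of_nonpos hlam.le (tauTL_nonpos_of_sparse hpx0.1)
    linarith
  have hdata : l2norm (A.mulVec (xhat - px0)) ≤ l2norm (A.mulVec xhat - y) + M := by
    have hsplit : A.mulVec (xhat - px0) = (A.mulVec xhat - y) + (y - A.mulVec px0) := by
      rw [Matrix.mulVec_sub]
      abel
    rw [hsplit]
    exact (l2norm_add_le _ _).trans (add_le_add le_rfl hres)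
  have hrecover : ∀ (z : Fin d → ℝ) (B : ℝ), Set.ncard {i : Fin d | z i ≠ 0} ≤ k →
      l2norm (A.mulVec (z - px0)) ≤ B → ∑ i, |z i - x0 i| ≤ tauTL k x0 + B / α := by
    intro z B hz hB
    have hsparse := (ncard_support_sub_le z px0).trans (add_le_add hz hpx0.1)
    have hlower := hrip (z - px0) (by omega)
    have hdist : ∑ i, |z i - px0 i| ≤ B / α := by
      rw [le_div_iff₀ hα, mul_comm]
      exact hlower.trans hB
    linarith [sum_abs_sub_le_add z px0 x0]
  have hτ := tauTL_nonneg k xhat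
  have hr := l2norm_nonneg (A.mulVec xhat - y)
  constructor
  · have hproj : l2norm (A.mulVec (xhat - pxhat)) ≤ β * tauTL k xhat :=
      (l2norm_mulVec_le A _).trans
        (mul_le_mul_of_nonneg_left hpxhat.sum_abs_sub_le_tauTL hβ)
    have htriangle : l2norm (A.mulVec (pxhat - px0)) ≤
        l2norm (A.mulVec (xhat - px0)) + l2norm (A.mulVec (xhat - pxhat)) := by
      have hsplit : A.mulVec (pxhat - px0) =
          A.mulVec (xhat - px0) - A.mulVec (xhat - pxhat) := by
        rw [← Matrix.mulVec_sub]
        congr 1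
        abel
      rw [hsplit]
      exact l2norm_sub_le _ _
    have hone : 1 ≤ max 1 (β / lam) := le_max_left _ _
    have hβlam : β ≤ max 1 (β / lam) * lam := (div_le_iff₀ hlam).1 (le_max_right _ _)
    have hweighted : l2norm (A.mulVec xhat - y) + β * tauTL k xhat ≤ max 1 (β / lam) * M := by
      calc l2norm (A.mulVec xhat - y) + β * tauTL k xhat
          ≤ max 1 (β / lam) * l2norm (A.mulVec xhat - y)
            + max 1 (β / lam) * lam * tauTL k xhat :=
            add_le_add (le_mul_of_one_le_left hr hone) (mul_le_mul_of_nonneg_right hβlam hτ)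
        _ = max 1 (β / lam) * (l2norm (A.mulVec xhat - y) + lam * tauTL k xhat) := by ring
        _ ≤ max 1 (β / lam) * M :=
            mul_le_mul_of_nonneg_left hobj (zero_le_one.trans hone)
    refine (hrecover pxhat ((1 + max 1 (β / lam)) * M) hpxhat.1 (by linarith)).trans
      (le_of_eq ?_)
    ring
  · intro hsparse
    have hpen := mul_nonneg hlam.le hτ
    refine (hrecover xhat (2 * M) hsparse (by linarith)).trans (le_of_eq ?_)
    simp only [M]
    ring
end

section
/- For every x ∈ ℝ^d, the function γ ↦ τ_{k,γ}(x) is monotone decreasing on (0,∞); its limit as γ → 0 equals ((d−k)/d)‖x‖₁ and its limit as γ → ∞ equals τ_k(x). Moreover, for every x ∈ ℝ^d and every γ ∈ (0,∞), τ_k(x) ≤ τ_{k,γ}(x) ≤ τ_k(x) + (1/γ) log C(d,k), so the convergence τ_{k,γ} → τ_k as γ → ∞ is uniform over x ∈ ℝ^d. -/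
open Finset Filter Topology

/-- The generalized soft-min penalty τ_{k,γ}; at γ = 0 it equals
((d−k)/d)‖x‖₁. -/
noncomputable def tauGSM {d : ℕ} (k : ℕ) (γ : ℝ) (x : Fin d → ℝ) : ℝ :=
  if γ = 0 then (((d : ℝ) - (k : ℝ)) / (d : ℝ)) * ∑ i, |x i|
  else -(1 / γ) * Real.log ((1 / (d.choose (d - k) : ℝ)) *
    ∑ Λ ∈ Finset.univ.powersetCard (d - k), Real.exp (-γ * ∑ i ∈ Λ, |x i|))

section SoftMin

variable {ι : Type*} (s : Finset ι) (a : ι → ℝ)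

/-- The soft minimum, with parameter `γ`, of the family `a` over the finite set `s`. -/
noncomputable def softMin (γ : ℝ) : ℝ :=
  -(1 / γ) * Real.log ((1 / (#s : ℝ)) * ∑ i ∈ s, Real.exp (-γ * a i))

variable {s}

lemma softMin_antitoneOn (hs : s.Nonempty) : AntitoneOn (softMin s a) (Set.Ioi 0) := by
  intro p hp q hq hpq
  simp only [Set.mem_Ioi] at hp hq
  have hcard : (0 : ℝ) < #s := by exact_mod_cast hs.card_pos
  have hpos : ∀ γ : ℝ, 0 < (1 / (#s : ℝ)) * ∑ i ∈ s, Real.exp (-γ * a i) := fun γ =>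
    mul_pos (by positivity) (sum_pos (fun i _ => Real.exp_pos _) hs)
  have hmean := Real.rpow_arith_mean_le_arith_mean_rpow s (fun _ => 1 / (#s : ℝ))
    (fun i => Real.exp (-p * a i)) (fun _ _ => by positivity)
    (by simp [hcard.ne']) (fun _ _ => (Real.exp_pos _).le) ((one_le_div hp).2 hpq)
  have hexp : ∀ i, Real.exp (-p * a i) ^ (q / p) = Real.exp (-q * a i) := fun i => by
    rw [← Real.exp_mul]
    congr 1
    field_simp
  simp only [hexp, ← mul_sum] at hmean
  have hlog := Real.log_le_log (Real.rpow_pos_of_pos (hpos p) _) hmean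
  rw [Real.log_rpow (hpos p)] at hlog
  have hdiv := mul_le_mul_of_nonneg_left hlog (one_div_pos.2 hq).le
  have hcancel : ∀ L : ℝ, 1 / q * (q / p * L) = 1 / p * L := fun L => by field_simp
  rw [hcancel] at hdiv
  unfold softMin
  linarith

lemma softMin_tendsto_zero (hs : s.Nonempty) :
    Tendsto (softMin s a) (𝓝[>] 0) (𝓝 ((1 / (#s : ℝ)) * ∑ i ∈ s, a i)) := by
  have hcard : (#s : ℝ) ≠ 0 := by exact_mod_cast hs.card_pos.ne'
  have hone : (1 / (#s : ℝ)) * ∑ i ∈ s, Real.exp (-(0 : ℝ) * a i) = 1 := by simp [hcard]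
  have hsum : HasDerivAt (fun γ : ℝ => (1 / (#s : ℝ)) * ∑ i ∈ s, Real.exp (-γ * a i))
      ((1 / (#s : ℝ)) * ∑ i ∈ s, -a i) 0 := by
    refine HasDerivAt.const_mul _ (HasDerivAt.fun_sum fun i _ => ?_)
    simpa using (((hasDerivAt_id (0 : ℝ)).neg).mul_const (a i)).exp
  have hlog := (hsum.log (by rw [hone]; exact one_ne_zero)).tendsto_slope_zero_right.neg
  simp only [zero_add, hone, Real.log_one, sub_zero, div_one, smul_eq_mul, sum_neg_distrib,
    mul_neg, neg_neg] at hlog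
  refine hlog.congr fun γ => ?_
  simp [softMin]

variable {a}

lemma le_softMin {m γ : ℝ} (hs : s.Nonempty) (hm : ∀ i ∈ s, m ≤ a i) (hγ : 0 < γ) :
    m ≤ softMin s a γ := by
  have hcard : (0 : ℝ) < #s := by exact_mod_cast hs.card_pos
  have hsum : ∑ i ∈ s, Real.exp (-γ * a i) ≤ #s * Real.exp (-γ * m) := by
    rw [← nsmul_eq_mul]
    refine sum_le_card_nsmul _ _ _ fun i hi => Real.exp_le_exp.2 ?_
    nlinarith [hm i hi]
  have hlog : Real.log ((1 / (#s : ℝ)) * ∑ i ∈ s, Real.exp (-γ * a i)) ≤ -γ * m := by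
    rw [Real.log_le_iff_le_exp
      (mul_pos (by positivity) (sum_pos (fun i _ => Real.exp_pos _) hs)), one_div,
      inv_mul_le_iff₀ hcard]
    exact hsum
  have hdiv := mul_le_mul_of_nonneg_left hlog (one_div_pos.2 hγ).le
  have hcancel : 1 / γ * (-γ * m) = -m := by field_simp
  unfold softMin
  linarith

lemma softMin_le {i : ι} {γ : ℝ} (hi : i ∈ s) (hγ : 0 < γ) :
    softMin s a γ ≤ a i + (1 / γ) * Real.log #s := by
  have hcard : (0 : ℝ) < #s := by exact_mod_cast card_pos.2 ⟨i, hi⟩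
  have hsum : Real.exp (-γ * a i) ≤ ∑ j ∈ s, Real.exp (-γ * a j) :=
    single_le_sum (f := fun j => Real.exp (-γ * a j)) (fun j _ => (Real.exp_pos _).le) hi
  have hlog : -γ * a i - Real.log #s ≤
      Real.log ((1 / (#s : ℝ)) * ∑ j ∈ s, Real.exp (-γ * a j)) := by
    rw [Real.log_mul (by positivity) ((Real.exp_pos _).trans_le hsum).ne', one_div, Real.log_inv]
    linarith [(Real.le_log_iff_exp_le ((Real.exp_pos _).trans_le hsum)).2 hsum]
  have hdiv := mul_le_mul_of_nonneg_left hlog (one_div_pos.2 hγ).le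
  have hcancel : 1 / γ * (-γ * a i - Real.log #s) = -a i - 1 / γ * Real.log #s := by field_simp
  unfold softMin
  linarith

end SoftMin

lemma sum_powersetCard_sum {α : Type*} [DecidableEq α] (s : Finset α) (n : ℕ) (f : α → ℝ) :
    ∑ t ∈ s.powersetCard (n + 1), ∑ i ∈ t, f i = ((#s - 1).choose n : ℝ) * ∑ i ∈ s, f i := by
  have hcomm : ∑ t ∈ s.powersetCard (n + 1), ∑ i ∈ t, f i =
      ∑ i ∈ s, ∑ t ∈ s.powersetCard (n + 1) with {i} ⊆ t, f i := by
    refine sum_comm' fun t i => ?_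
    simp only [mem_powersetCard, mem_filter, singleton_subset_iff]
    exact ⟨fun h => ⟨h, h.1.1 h.2⟩, fun h => h.1⟩
  rw [hcomm, mul_sum]
  refine sum_congr rfl fun i hi => ?_
  rw [sum_const, card_filter_powersetCard_subset _ _ _ (singleton_subset_iff.2 hi) (by simp)]
  simp

lemma mean_powersetCard_sum {d k : ℕ} (hkd : k < d) (f : Fin d → ℝ) :
    (1 / (d.choose (d - k) : ℝ)) * ∑ Λ ∈ univ.powersetCard (d - k), ∑ i ∈ Λ, f i =
      (((d : ℝ) - (k : ℝ)) / (d : ℝ)) * ∑ i, f i := by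
  obtain ⟨n, rfl⟩ := Nat.exists_eq_add_of_lt hkd
  have hsub : k + n + 1 - k = n + 1 := by lia
  have hchoose : ((k + n + 1).choose (n + 1) : ℝ) ≠ 0 := by
    exact_mod_cast (Nat.choose_pos (by lia)).ne'
  have hmul : ((k + n : ℕ) + 1 : ℝ) * ((k + n).choose n : ℝ) =
      ((k + n + 1).choose (n + 1) : ℝ) * (n + 1) := by
    exact_mod_cast Nat.add_one_mul_choose_eq (k + n) n
  rw [hsub, sum_powersetCard_sum, ← mul_assoc]
  congr 1
  rw [card_univ, Fintype.card_fin, Nat.add_sub_cancel, one_div, ← div_eq_inv_mul,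
    div_eq_div_iff hchoose (by positivity)]
  push_cast at hmul ⊢
  linarith

lemma tauGSM_eq_softMin {d : ℕ} (k : ℕ) (x : Fin d → ℝ) {γ : ℝ} (hγ : 0 < γ) :
    tauGSM k γ x = softMin (univ.powersetCard (d - k)) (fun Λ => ∑ i ∈ Λ, |x i|) γ := by
  simp [tauGSM, softMin, hγ.ne']

lemma exists_isLeast_tauTL {d : ℕ} (k : ℕ) (x : Fin d → ℝ) :
    ∃ Λ ∈ (univ : Finset (Fin d)).powersetCard (d - k), tauTL k x = ∑ i ∈ Λ, |x i| ∧
      ∀ Λ' ∈ (univ : Finset (Fin d)).powersetCard (d - k), tauTL k x ≤ ∑ i ∈ Λ', |x i| := by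
  obtain ⟨Λ, hΛ, hmin⟩ := exists_min_image ((univ : Finset (Fin d)).powersetCard (d - k))
    (fun Λ => ∑ i ∈ Λ, |x i|) (powersetCard_nonempty.2 (by simp))
  have hleast : IsLeast ((fun Λ : Finset (Fin d) => ∑ i ∈ Λ, |x i|) ''
      {Λ : Finset (Fin d) | Λ.card = d - k}) (∑ i ∈ Λ, |x i|) := by
    refine ⟨⟨Λ, mem_powersetCard_univ.1 hΛ, rfl⟩, ?_⟩
    rintro _ ⟨Λ', hΛ', rfl⟩
    exact hmin Λ' (mem_powersetCard_univ.2 hΛ')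
  have heq : tauTL k x = ∑ i ∈ Λ, |x i| := hleast.csInf_eq
  exact ⟨Λ, hΛ, heq, heq ▸ hmin⟩

/-- τ_{k,γ}(x) is monotone decreasing in γ on (0,∞); it tends to
((d−k)/d)‖x‖₁ as γ → 0⁺ and to τ_k(x) as γ → ∞; moreover for all γ > 0,
τ_k(x) ≤ τ_{k,γ}(x) ≤ τ_k(x) + (1/γ) log C(d,k), so that the convergence as
γ → ∞ is uniform in x. -/
theorem stmt7 {d : ℕ} (k : ℕ) (hk : 0 < k) (hkd : k < d) (x : Fin d → ℝ) :
    AntitoneOn (fun γ : ℝ => tauGSM k γ x) (Set.Ioi (0 : ℝ)) ∧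
    Tendsto (fun γ : ℝ => tauGSM k γ x) (nhdsWithin 0 (Set.Ioi 0))
      (nhds ((((d : ℝ) - (k : ℝ)) / (d : ℝ)) * ∑ i, |x i|)) ∧
    Tendsto (fun γ : ℝ => tauGSM k γ x) atTop (nhds (tauTL k x)) ∧
    ∀ γ : ℝ, 0 < γ →
      tauTL k x ≤ tauGSM k γ x ∧
      tauGSM k γ x ≤ tauTL k x + (1 / γ) * Real.log (d.choose k : ℝ) := by
  have hs : ((univ : Finset (Fin d)).powersetCard (d - k)).Nonempty :=
    powersetCard_nonempty.2 (by simp)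
  obtain ⟨Λ, hΛ, hTL, hmin⟩ := exists_isLeast_tauTL k x
  have hbounds : ∀ γ : ℝ, 0 < γ → tauTL k x ≤ tauGSM k γ x ∧
      tauGSM k γ x ≤ tauTL k x + (1 / γ) * Real.log (d.choose k : ℝ) := fun γ hγ => by
    rw [tauGSM_eq_softMin k x hγ]
    refine ⟨le_softMin hs hmin hγ, ?_⟩
    have hle := softMin_le (a := fun Λ => ∑ i ∈ Λ, |x i|) hΛ hγ
    rwa [← hTL, card_powersetCard, card_univ, Fintype.card_fin, Nat.choose_symm hkd.le] at hle
  refine ⟨(softMin_antitoneOn _ hs).congr fun γ hγ => (tauGSM_eq_softMin k x hγ).symm, ?_, ?_,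
    hbounds⟩
  · have hlim := softMin_tendsto_zero (fun Λ => ∑ i ∈ Λ, |x i|) hs
    rw [card_powersetCard, card_univ, Fintype.card_fin, mean_powersetCard_sum hkd] at hlim
    exact tendsto_nhdsWithin_congr (fun γ hγ => (tauGSM_eq_softMin k x hγ).symm) hlim
  · have hupper : Tendsto (fun γ : ℝ => tauTL k x + (1 / γ) * Real.log (d.choose k : ℝ)) atTop
        (𝓝 (tauTL k x)) := by
      simpa using (tendsto_inv_atTop_zero.mul_const (Real.log (d.choose k : ℝ))).const_add
        (tauTL k x)
    refine tendsto_of_tendsto_of_tendsto_of_le_of_le' tendsto_const_nhds hupper ?_ ?_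
    · filter_upwards [eventually_gt_atTop 0] with γ hγ using (hbounds γ hγ).1
    · filter_upwards [eventually_gt_atTop 0] with γ hγ using (hbounds γ hγ).2
end

section
/- Let x ∈ ℝ^d and set Λ_a = {i : |x_i| < |x|_(k)} and Λ_b = {i : |x_i| = |x|_(k)}. Then for every i ∈ {1,…,d}, lim_{γ→∞} w_{k,γ}^i(x) equals 1 if i ∈ Λ_a, equals (d − k − |Λ_a|)/|Λ_b| if i ∈ Λ_b, and equals 0 otherwise. In particular, if |x|_(k) > |x|_(k+1), then w_{k,γ}(x) converges as γ → ∞ to the 0/1 vector that is 0 exactly on the (uniquely determined) index set of the k largest-magnitude entries of x and 1 elsewhere. -/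
open Finset Filter Topology

/-- The q-th largest entry (1-indexed) of a vector z ∈ ℝ^d. -/
noncomputable def kthLargest {d : ℕ} (z : Fin d → ℝ) (q : ℕ) : ℝ :=
  ((Finset.univ.val.map z).sort (· ≤ ·)).getD (d - q) 0

/-- The GSM weight vector w_{k,γ}(x). -/
noncomputable def wGSM {d : ℕ} (k : ℕ) (γ : ℝ) (x : Fin d → ℝ) (i : Fin d) : ℝ :=
  (∑ Λ ∈ (Finset.univ.powersetCard (d - k)).filter (fun Λ => i ∈ Λ),
      Real.exp (-γ * ∑ j ∈ Λ, |x j|)) /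
  (∑ Λ ∈ Finset.univ.powersetCard (d - k), Real.exp (-γ * ∑ j ∈ Λ, |x j|))

theorem card_lt_kthLargest_le {d k : ℕ} (z : Fin d → ℝ) (hk : 0 < k) (hkd : k ≤ d) :
    #{j | z j < kthLargest z k} ≤ d - k := by
  set l := (Finset.univ.val.map z).sort (· ≤ ·) with hl
  have hlen : l.length = d := by simp [hl]
  have hsort : l.Pairwise (· ≤ ·) := Multiset.pairwise_sort _ _
  have hm : d - k < l.length := by omega
  have hT : kthLargest z k = l[d - k] := List.getD_eq_getElem _ _ hm
  have hcount : #{j | z j < kthLargest z k} = l.countP (· < kthLargest z k) := by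
    rw [← Multiset.coe_countP, hl, Multiset.sort_eq, Multiset.countP_map]
    rfl
  rw [hcount, ← List.take_append_drop (d - k) l, List.countP_append]
  have hdrop : (l.drop (d - k)).countP (· < kthLargest z k) = 0 := by
    rw [List.countP_eq_zero]
    intro a ha
    obtain ⟨n, hn, rfl⟩ := List.mem_iff_getElem.1 ha
    simp only [List.getElem_drop, hT, decide_eq_true_eq, not_lt]
    exact hsort.sortedLE.getElem_le_getElem_of_le (by omega)
  rw [hdrop, add_zero]
  exact List.countP_le_length.trans (by simp)

theorem lt_card_le_kthLargest {d k : ℕ} (z : Fin d → ℝ) (hk : 0 < k) (hkd : k ≤ d) :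
    d - k < #{j | z j ≤ kthLargest z k} := by
  set l := (Finset.univ.val.map z).sort (· ≤ ·) with hl
  have hlen : l.length = d := by simp [hl]
  have hsort : l.Pairwise (· ≤ ·) := Multiset.pairwise_sort _ _
  have hm : d - k < l.length := by omega
  have hT : kthLargest z k = l[d - k] := List.getD_eq_getElem _ _ hm
  have hcount : #{j | z j ≤ kthLargest z k} = l.countP (· ≤ kthLargest z k) := by
    rw [← Multiset.coe_countP, hl, Multiset.sort_eq, Multiset.countP_map]
    rfl
  rw [hcount, ← List.take_append_drop (d - k + 1) l, List.countP_append]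
  have htake : (l.take (d - k + 1)).countP (· ≤ kthLargest z k) = d - k + 1 := by
    rw [List.countP_eq_length.2, List.length_take]
    · omega
    · intro a ha
      obtain ⟨n, hn, rfl⟩ := List.mem_iff_getElem.1 ha
      rw [List.length_take] at hn
      simp only [List.getElem_take, hT, decide_eq_true_eq]
      exact hsort.sortedLE.getElem_le_getElem_of_le (by omega)
  omega

theorem sum_exp_powersetCard_pos {d k : ℕ} (γ : ℝ) (x : Fin d → ℝ) :
    0 < ∑ Λ ∈ (univ : Finset (Fin d)).powersetCard (d - k),
      Real.exp (-γ * ∑ j ∈ Λ, |x j|) :=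
  sum_pos (fun _ _ => Real.exp_pos _) (powersetCard_nonempty.2 (by simp))

/-- The total weight of a family of sets none of which has minimal sum is negligible. -/
theorem tendsto_sum_exp_div_of_not_minimal {d k : ℕ} (x : Fin d → ℝ)
    (F : Finset (Finset (Fin d)))
    (hF : ∀ Λ ∈ F, ∃ Λ' : Finset (Fin d), #Λ' = d - k ∧ ∑ j ∈ Λ', |x j| < ∑ j ∈ Λ, |x j|) :
    Tendsto (fun γ : ℝ => (∑ Λ ∈ F, Real.exp (-γ * ∑ j ∈ Λ, |x j|)) /
      ∑ Λ ∈ (univ : Finset (Fin d)).powersetCard (d - k), Real.exp (-γ * ∑ j ∈ Λ, |x j|))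
      atTop (𝓝 0) := by
  simp_rw [sum_div]
  rw [← sum_const_zero (s := F)]
  refine tendsto_finsetSum _ fun Λ hΛ => ?_
  obtain ⟨Λ', hcard, hlt⟩ := hF Λ hΛ
  have hexp : Tendsto (fun γ : ℝ => Real.exp (-(γ * (∑ j ∈ Λ, |x j| - ∑ j ∈ Λ', |x j|))))
      atTop (𝓝 0) :=
    Real.tendsto_exp_neg_atTop_nhds_zero.comp (tendsto_id.atTop_mul_const (sub_pos.2 hlt))
  refine squeeze_zero (fun γ => div_nonneg (Real.exp_pos _).le
    (sum_exp_powersetCard_pos γ x).le) (fun γ => ?_) hexp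
  rw [div_le_iff₀ (sum_exp_powersetCard_pos γ x)]
  calc Real.exp (-γ * ∑ j ∈ Λ, |x j|)
      = Real.exp (-(γ * (∑ j ∈ Λ, |x j| - ∑ j ∈ Λ', |x j|))) *
          Real.exp (-γ * ∑ j ∈ Λ', |x j|) := by
        rw [← Real.exp_add]; ring_nf
    _ ≤ _ := by
        gcongr
        exact single_le_sum (f := fun Λ => Real.exp (-γ * ∑ j ∈ Λ, |x j|))
          (fun _ _ => (Real.exp_pos _).le) (mem_powersetCard.2 ⟨subset_univ _, hcard⟩)

/-- Exchanging an element of a set for one with a smaller value decreases the sum. -/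
theorem exists_card_eq_sum_lt {ι : Type*} [DecidableEq ι] (z : ι → ℝ) (Λ : Finset ι) {i j : ι}
    (hi : i ∈ Λ) (hj : j ∉ Λ) (hlt : z j < z i) :
    ∃ Λ' : Finset ι, #Λ' = #Λ ∧ ∑ a ∈ Λ', z a < ∑ a ∈ Λ, z a := by
  have hj' : j ∉ Λ.erase i := fun h => hj (mem_of_mem_erase h)
  refine ⟨insert j (Λ.erase i), ?_, ?_⟩
  · rw [card_insert_of_notMem hj', card_erase_add_one hi]
  · rw [sum_insert hj', ← add_sum_erase Λ z hi]
    gcongr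

theorem tendsto_wGSM_of_kthLargest_lt {d k : ℕ} (hk : 0 < k) (hkd : k < d) (x : Fin d → ℝ)
    {i : Fin d} (hi : kthLargest (fun j => |x j|) k < |x i|) :
    Tendsto (fun γ : ℝ => wGSM k γ x i) atTop (𝓝 0) := by
  refine tendsto_sum_exp_div_of_not_minimal x _ fun Λ hΛ => ?_
  obtain ⟨hΛ, hiΛ⟩ := mem_filter.1 hΛ
  have hcard := (mem_powersetCard.1 hΛ).2
  obtain ⟨j, hj, hjΛ⟩ := exists_mem_notMem_of_card_lt_card
    (hcard.trans_lt (lt_card_le_kthLargest (fun j => |x j|) hk hkd.le))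
  rw [← hcard]
  exact exists_card_eq_sum_lt (fun j => |x j|) Λ hiΛ hjΛ ((mem_filter.1 hj).2.trans_lt hi)

theorem wGSM_eq_one_sub {d : ℕ} (k : ℕ) (γ : ℝ) (x : Fin d → ℝ) (i : Fin d) :
    wGSM k γ x i = 1 -
      (∑ Λ ∈ (univ.powersetCard (d - k)).filter (fun Λ => i ∉ Λ),
        Real.exp (-γ * ∑ j ∈ Λ, |x j|)) /
      ∑ Λ ∈ (univ : Finset (Fin d)).powersetCard (d - k), Real.exp (-γ * ∑ j ∈ Λ, |x j|) := by
  have hpos := sum_exp_powersetCard_pos (k := k) γ x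
  rw [wGSM, eq_sub_iff_add_eq, ← add_div, sum_filter_add_sum_filter_not, div_self hpos.ne']

theorem tendsto_wGSM_of_lt_kthLargest {d k : ℕ} (hk : 0 < k) (hkd : k < d) (x : Fin d → ℝ)
    {i : Fin d} (hi : |x i| < kthLargest (fun j => |x j|) k) :
    Tendsto (fun γ : ℝ => wGSM k γ x i) atTop (𝓝 1) := by
  simp_rw [wGSM_eq_one_sub]
  rw [show 𝓝 (1 : ℝ) = 𝓝 (1 - 0) by rw [sub_zero]]
  refine tendsto_const_nhds.sub (tendsto_sum_exp_div_of_not_minimal x _ fun Λ hΛ => ?_)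
  obtain ⟨hΛ, hiΛ⟩ := mem_filter.1 hΛ
  have hcard := (mem_powersetCard.1 hΛ).2
  have hle := card_lt_kthLargest_le (fun j => |x j|) hk hkd.le
  have hi' : i ∈ ({j | |x j| < kthLargest (fun j => |x j|) k} : Finset (Fin d)) := by simpa using hi
  have hlt : #(({j | |x j| < kthLargest (fun j => |x j|) k} : Finset (Fin d)).erase i) < #Λ := by
    have := card_erase_add_one hi'
    omega
  obtain ⟨j, hj, hjΛ⟩ := exists_mem_notMem_of_card_lt_card hlt
  have hji : j ≠ i := fun h => hiΛ (h ▸ hj)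
  have hjT : kthLargest (fun j => |x j|) k ≤ |x j| := by
    simpa [hji] using hjΛ
  rw [← hcard]
  exact exists_card_eq_sum_lt (fun j => |x j|) Λ hj hiΛ (hi.trans_le hjT)

theorem wGSM_eq_of_abs_eq {d : ℕ} (k : ℕ) (γ : ℝ) (x : Fin d → ℝ) {i j : Fin d}
    (hij : |x i| = |x j|) : wGSM k γ x i = wGSM k γ x j := by
  unfold wGSM
  congr 1
  refine sum_equiv (Equiv.swap i j).finsetCongr (fun Λ => ?_) (fun Λ _ => ?_)
  · simp [mem_powersetCard, mem_map_equiv]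
  · congr 2
    rw [Equiv.finsetCongr_apply, sum_map]
    refine sum_congr rfl fun a _ => ?_
    rw [Equiv.coe_toEmbedding, Equiv.swap_apply_def]
    split_ifs with h₁ h₂
    · rw [h₁, hij]
    · rw [h₂, hij]
    · rfl

theorem sum_wGSM {d : ℕ} (k : ℕ) (γ : ℝ) (x : Fin d → ℝ) :
    ∑ i, wGSM k γ x i = ((d - k : ℕ) : ℝ) := by
  have hpos := sum_exp_powersetCard_pos (k := k) γ x
  unfold wGSM
  rw [← sum_div, div_eq_iff hpos.ne', mul_sum]
  simp_rw [sum_filter]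
  rw [sum_comm]
  refine sum_congr rfl fun Λ hΛ => ?_
  rw [← sum_filter, sum_const, nsmul_eq_mul, filter_univ_mem, (mem_powersetCard.1 hΛ).2]

theorem tendsto_wGSM_of_eq_kthLargest {d k : ℕ} (hk : 0 < k) (hkd : k < d) (x : Fin d → ℝ)
    {i : Fin d} (hi : |x i| = kthLargest (fun j => |x j|) k) :
    Tendsto (fun γ : ℝ => wGSM k γ x i) atTop (𝓝
      (((d : ℝ) - k - #{j | |x j| < kthLargest (fun j => |x j|) k}) /
        #{j | |x j| = kthLargest (fun j => |x j|) k})) := by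
  set T := kthLargest (fun j => |x j|) k
  have hb : ((#{j | |x j| = T} : ℕ) : ℝ) ≠ 0 :=
    Nat.cast_ne_zero.2 (card_ne_zero_of_mem (mem_filter.2 ⟨mem_univ i, hi⟩))
  have hw : ∀ γ, wGSM k γ x i =
      ((d : ℝ) - k - ∑ j with |x j| < T, wGSM k γ x j - ∑ j with T < |x j|, wGSM k γ x j) /
        #{j | |x j| = T} := by
    intro γ
    rw [eq_div_iff hb]
    have heq : ∑ j with |x j| = T, wGSM k γ x j = wGSM k γ x i * #{j | |x j| = T} := by
      rw [sum_congr rfl fun j hj => wGSM_eq_of_abs_eq k γ x ((mem_filter.1 hj).2.trans hi.symm),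
        sum_const, nsmul_eq_mul, mul_comm]
    have hsplit : ∑ j, wGSM k γ x j = ∑ j with |x j| < T, wGSM k γ x j +
        ∑ j with |x j| = T, wGSM k γ x j + ∑ j with T < |x j|, wGSM k γ x j := by
      simp_rw [sum_filter, ← sum_add_distrib]
      refine sum_congr rfl fun j _ => ?_
      rcases lt_trichotomy (|x j|) T with h | h | h
      · simp [h, h.ne, h.not_gt]
      · simp [h]
      · simp [h, h.ne', h.not_gt]
    rw [sum_wGSM, Nat.cast_sub hkd.le] at hsplit
    linarith
  have ha : Tendsto (fun γ : ℝ => ∑ j with |x j| < T, wGSM k γ x j) atTop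
      (𝓝 (#{j | |x j| < T} : ℕ)) := by
    rw [← nsmul_one, ← sum_const]
    exact tendsto_finsetSum _ fun j hj =>
      tendsto_wGSM_of_lt_kthLargest hk hkd x (mem_filter.1 hj).2
  have hc : Tendsto (fun γ : ℝ => ∑ j with T < |x j|, wGSM k γ x j) atTop (𝓝 0) := by
    rw [← sum_const_zero (s := ({j | T < |x j|} : Finset (Fin d)))]
    exact tendsto_finsetSum _ fun j hj =>
      tendsto_wGSM_of_kthLargest_lt hk hkd x (mem_filter.1 hj).2
  simp_rw [hw]
  simpa only [sub_zero] using ((tendsto_const_nhds.sub ha).sub hc).div_const _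

/-- Limit of the weight vector w_{k,γ}(x) as γ → ∞: with
Λ_a = {i : |x i| < |x|₍k₎} and Λ_b = {i : |x i| = |x|₍k₎}, the i-th weight tends
to 1 on Λ_a, to (d − k − |Λ_a|)/|Λ_b| on Λ_b, and to 0 elsewhere. In
particular, if |x|₍k₎ > |x|₍k₊₁₎, the weights tend to the 0/1 vector that is 0
exactly on the index set of the k largest-magnitude entries of x. -/
theorem stmt8 {d : ℕ} (k : ℕ) (hk : 0 < k) (hkd : k < d) (x : Fin d → ℝ) :
    (∀ i : Fin d,
      Tendsto (fun γ : ℝ => wGSM k γ x i) atTop (nhds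
        (if |x i| < kthLargest (fun j => |x j|) k then 1
         else if |x i| = kthLargest (fun j => |x j|) k then
           ((d : ℝ) - (k : ℝ) -
              (Set.ncard {j : Fin d | |x j| < kthLargest (fun j => |x j|) k} : ℝ)) /
             (Set.ncard {j : Fin d | |x j| = kthLargest (fun j => |x j|) k} : ℝ)
         else 0))) ∧
    (kthLargest (fun j => |x j|) (k + 1) < kthLargest (fun j => |x j|) k →
      ∀ i : Fin d,
        Tendsto (fun γ : ℝ => wGSM k γ x i) atTop
          (nhds (if kthLargest (fun j => |x j|) k ≤ |x i| then 0 else 1))) := by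
  have hncard : ∀ (p : Fin d → Prop) [DecidablePred p], Set.ncard {j | p j} = #{j | p j} := by
    intro p _
    rw [← Set.ncard_coe_finset, coe_filter_univ]
  rw [hncard, hncard]
  refine ⟨fun i => ?_, fun hgap i => ?_⟩
  · split_ifs with hlt heq
    · exact tendsto_wGSM_of_lt_kthLargest hk hkd x hlt
    · exact tendsto_wGSM_of_eq_kthLargest hk hkd x heq
    · exact tendsto_wGSM_of_kthLargest_lt hk hkd x
        (lt_of_le_of_ne (not_lt.1 hlt) (Ne.symm heq))
  · split_ifs with hle
    · rcases hle.lt_or_eq with hlt | heq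
      · exact tendsto_wGSM_of_kthLargest_lt hk hkd x hlt
      · have hcard : #{j | |x j| < kthLargest (fun j => |x j|) k} = d - k := by
          refine (card_lt_kthLargest_le (fun j => |x j|) hk hkd.le).antisymm ?_
          have hlt := lt_card_le_kthLargest (fun j => |x j|) k.succ_pos hkd
          have hsub : #{j | |x j| ≤ kthLargest (fun j => |x j|) (k + 1)} ≤
              #{j | |x j| < kthLargest (fun j => |x j|) k} :=
            card_le_card (monotone_filter_right _ fun j _ hj => hj.trans_lt hgap)
          simp only [Nat.succ_eq_add_one] at hlt
          omega
        have h := tendsto_wGSM_of_eq_kthLargest hk hkd x heq.symm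
        rwa [hcard, Nat.cast_sub hkd.le, sub_self, zero_div] at h
    · exact tendsto_wGSM_of_lt_kthLargest hk hkd x (not_le.1 hle)
end

section
/- For every γ ∈ [0,∞), the function τ̄_{k,γ}(x, x̃) = τ_{k,γ}(x̃) + ⟨w_{k,γ}(x̃), |x| − |x̃|⟩ is a majorizer of τ_{k,γ}: for all x, x̃ ∈ ℝ^d one has τ̄_{k,γ}(x, x̃) ≥ τ_{k,γ}(x), and τ̄_{k,γ}(x, x) = τ_{k,γ}(x). Here |x| denotes the vector of absolute values (|x_1|,…,|x_d|) and ⟨·,·⟩ the Euclidean inner product. -/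
open Finset Filter Topology

/-- The log-partition function `a ↦ log ∑ exp a` lies above its tangent planes. -/
theorem log_sum_exp_tangent_le {ι : Type*} {s : Finset ι} (hs : s.Nonempty) (a b : ι → ℝ) :
    Real.log (∑ i ∈ s, Real.exp (b i)) +
        (∑ i ∈ s, Real.exp (b i) * (a i - b i)) / ∑ i ∈ s, Real.exp (b i) ≤
      Real.log (∑ i ∈ s, Real.exp (a i)) := by
  have hpos : 0 < ∑ i ∈ s, Real.exp (b i) := sum_pos (fun i _ => Real.exp_pos _) hs
  have jensen := convexOn_exp.map_sum_le (t := s)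
    (w := fun i => Real.exp (b i) / ∑ j ∈ s, Real.exp (b j)) (p := fun i => a i - b i)
    (fun i _ => by positivity) (by rw [← sum_div, div_self hpos.ne']) (fun i _ => Set.mem_univ _)
  have hexp : ∀ i, Real.exp (b i) * Real.exp (a i - b i) = Real.exp (a i) := fun i => by
    rw [← Real.exp_add, add_sub_cancel]
  simp only [smul_eq_mul, div_mul_eq_mul_div, ← sum_div, hexp] at jensen
  rw [le_div_iff₀ hpos] at jensen
  have hlog := Real.log_le_log (by positivity) jensen
  rw [Real.log_mul (Real.exp_pos _).ne' hpos.ne', Real.log_exp] at hlog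
  linarith

/-- Pairing the weights with a vector averages its partial sums over the `(d - k)`-subsets. -/
theorem sum_wGSM_mul {d : ℕ} (k : ℕ) (γ : ℝ) (x y : Fin d → ℝ) :
    ∑ i, wGSM k γ x i * y i =
      (∑ Λ ∈ Finset.univ.powersetCard (d - k),
        Real.exp (-γ * ∑ j ∈ Λ, |x j|) * ∑ i ∈ Λ, y i) /
      ∑ Λ ∈ Finset.univ.powersetCard (d - k), Real.exp (-γ * ∑ j ∈ Λ, |x j|) := by
  simp only [wGSM, div_mul_eq_mul_div, ← sum_div, sum_filter, sum_mul, mul_sum]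
  rw [sum_comm]
  simp [ite_mul]

theorem wGSM_zero {d : ℕ} {k : ℕ} (hkd : k < d) (x : Fin d → ℝ) (i : Fin d) :
    wGSM k 0 x i = ((d : ℝ) - k) / d := by
  have hcard := card_filter_powersetCard_subset {i} (univ : Finset (Fin d)) (d - k)
    (subset_univ _) (by rw [card_singleton]; omega)
  simp only [singleton_subset_iff, card_univ, Fintype.card_fin, card_singleton] at hcard
  have hchoose : d * (d - 1).choose (d - k - 1) = d.choose (d - k) * (d - k) := by
    have h := Nat.add_one_mul_choose_eq (d - 1) (d - k - 1)
    rwa [Nat.sub_add_cancel (by omega), Nat.sub_add_cancel (by omega)] at h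
  have hcast : (d : ℝ) * (d - 1).choose (d - k - 1) = d.choose (d - k) * ((d : ℝ) - k) := by
    rw [← Nat.cast_sub hkd.le]
    exact_mod_cast hchoose
  have hd : (d : ℝ) ≠ 0 := by
    rw [Nat.cast_ne_zero]
    omega
  have hc : (d.choose (d - k) : ℝ) ≠ 0 :=
    Nat.cast_ne_zero.2 (Nat.choose_pos (Nat.sub_le d k)).ne'
  simp only [wGSM, neg_zero, zero_mul, Real.exp_zero, sum_const, nsmul_eq_mul, mul_one, hcard,
    card_powersetCard, card_univ, Fintype.card_fin]
  rw [div_eq_div_iff hc hd]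
  linarith

/-- For every γ ∈ [0,∞), τ̄_{k,γ}(x,x̃) = τ_{k,γ}(x̃) + ⟨w_{k,γ}(x̃), |x|−|x̃|⟩
majorizes τ_{k,γ}: it is ≥ τ_{k,γ}(x) for all x, x̃, with equality at x = x̃. -/
theorem stmt10 {d : ℕ} (k : ℕ) (hk : 0 < k) (hkd : k < d)
    (γ : ℝ) (hγ : 0 ≤ γ) (x xt : Fin d → ℝ) :
    tauGSM k γ x ≤ tauGSM k γ xt + ∑ i, wGSM k γ xt i * (|x i| - |xt i|) ∧
    tauGSM k γ xt + (∑ i, wGSM k γ xt i * (|xt i| - |xt i|)) = tauGSM k γ xt := by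
  refine ⟨?_, by simp⟩
  rcases hγ.eq_or_lt with rfl | hpos
  · simp only [wGSM_zero hkd, tauGSM, if_true, ← mul_sum, sum_sub_distrib]
    linarith
  · have hne : (univ.powersetCard (d - k) : Finset (Finset (Fin d))).Nonempty :=
      powersetCard_nonempty.2 (by simp)
    have hc : (1 / (d.choose (d - k) : ℝ)) ≠ 0 :=
      one_div_ne_zero (Nat.cast_ne_zero.2 (Nat.choose_pos (Nat.sub_le d k)).ne')
    have hsum : ∀ y : Fin d → ℝ,
        ∑ Λ ∈ univ.powersetCard (d - k), Real.exp (-γ * ∑ i ∈ Λ, |y i|) ≠ 0 :=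
      fun y => (sum_pos (fun _ _ => Real.exp_pos _) hne).ne'
    have tangent := log_sum_exp_tangent_le hne
      (fun Λ => -γ * ∑ i ∈ Λ, |x i|) (fun Λ => -γ * ∑ i ∈ Λ, |xt i|)
    simp only [← mul_sub, ← sum_sub_distrib, mul_left_comm _ (-γ), ← mul_sum, mul_div_assoc,
      ← sum_wGSM_mul] at tangent
    simp only [tauGSM, if_neg hpos.ne', Real.log_mul hc (hsum _)]
    have scaled := mul_le_mul_of_nonneg_left tangent (one_div_pos.2 hpos).le
    have hcancel : 1 / γ * γ = 1 := one_div_mul_cancel hpos.ne'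
    linear_combination scaled + (∑ i, wGSM k γ xt i * (|x i| - |xt i|)) * hcancel
end

section
/- Let z ∈ ℝ^d with entries sorted as z_(1) ≥ … ≥ z_(d), and let 0 < k < d. For the limit γ → +∞, set Λ_a = {i : z_i > z_(k)} and Λ_b = {i : z_i = z_(k)}; for the limit γ → −∞, set Λ_a = {i : z_i < z_(d−k+1)} and Λ_b = {i : z_i = z_(d−k+1)}. Then in each case, for every i ∈ {1,…,d}, lim_{γ→±∞} θ_{k,γ}^i(z) equals 1 if i ∈ Λ_a, equals (k − |Λ_a|)/|Λ_b| if i ∈ Λ_b, and equals 0 otherwise. -/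
open Finset Filter Topology

/-- The generalized soft-max weights θ_{k,γ}(z). -/
noncomputable def thetaGSM {d : ℕ} (k : ℕ) (γ : ℝ) (z : Fin d → ℝ) (i : Fin d) : ℝ :=
  (∑ Λ ∈ (Finset.univ.powersetCard k).filter (fun Λ => i ∈ Λ),
      Real.exp (γ * ∑ j ∈ Λ, z j)) /
  (∑ Λ ∈ Finset.univ.powersetCard k, Real.exp (γ * ∑ j ∈ Λ, z j))

/-- At most `n` entries of a vector lie strictly below the entry in position `n` (from zero) of its
increasing rearrangement. -/
lemma card_filter_lt_sort_getD {d : ℕ} (z : Fin d → ℝ) {n : ℕ} (hn : n < d) :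
    #{j | z j < ((Finset.univ.val.map z).sort (· ≤ ·)).getD n 0} ≤ n := by
  set L := (Finset.univ.val.map z).sort (· ≤ ·) with hL
  have hlen : L.length = d := by simp [hL]
  have hs : L.Pairwise (· ≤ ·) := Multiset.pairwise_sort ..
  have hcoe : (L : Multiset ℝ) = Finset.univ.val.map z := Multiset.sort_eq ..
  set t := L.getD n 0 with ht
  have ht' : t = L[n]'(by omega) := by simp [ht, hlen, hn]
  have hcard : #{j | z j < t} = L.countP (· < t) := by
    rw [← Multiset.coe_countP, hcoe, Multiset.countP_map]
    simp [Finset.card_def]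
  rw [hcard, ← List.take_append_drop n L, List.countP_append]
  have h0 : (L.drop n).countP (· < t) = 0 := by
    rw [List.countP_eq_zero]
    intro a ha
    obtain ⟨m, hm, rfl⟩ := List.getElem_of_mem ha
    simp only [List.getElem_drop, decide_eq_true_eq, not_lt, ht']
    exact hs.rel_get_of_le (a := ⟨n, by omega⟩) (b := ⟨n + m, by simp at hm; omega⟩) (by simp)
  rw [h0]
  exact List.countP_le_length.trans (by simp)

/-- At most `d - 1 - n` entries of a vector lie strictly above the entry in position `n` (from
zero) of its increasing rearrangement. -/
lemma card_filter_sort_getD_lt {d : ℕ} (z : Fin d → ℝ) {n : ℕ} (hn : n < d) :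
    #{j | ((Finset.univ.val.map z).sort (· ≤ ·)).getD n 0 < z j} ≤ d - 1 - n := by
  set L := (Finset.univ.val.map z).sort (· ≤ ·) with hL
  have hlen : L.length = d := by simp [hL]
  have hs : L.Pairwise (· ≤ ·) := Multiset.pairwise_sort ..
  have hcoe : (L : Multiset ℝ) = Finset.univ.val.map z := Multiset.sort_eq ..
  set t := L.getD n 0 with ht
  have ht' : t = L[n]'(by omega) := by simp [ht, hlen, hn]
  have hcard : #{j | t < z j} = L.countP (t < ·) := by
    rw [← Multiset.coe_countP, hcoe, Multiset.countP_map]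
    simp [Finset.card_def]
  rw [hcard, ← List.take_append_drop (n + 1) L, List.countP_append]
  have h0 : (L.take (n + 1)).countP (t < ·) = 0 := by
    rw [List.countP_eq_zero]
    intro a ha
    obtain ⟨m, hm, rfl⟩ := List.getElem_of_mem ha
    simp only [List.getElem_take, decide_eq_true_eq, not_lt, ht']
    simp at hm
    exact hs.rel_get_of_le (a := ⟨m, by omega⟩) (b := ⟨n, by omega⟩) (by simp; omega)
  rw [h0, zero_add]
  exact List.countP_le_length.trans (by simp; omega)

/-- Gibbs weights concentrate uniformly on the maximizers of the energy. -/
lemma tendsto_sum_exp_div_sum_exp {α : Type*} [DecidableEq α] {P S : Finset α} (hSP : S ⊆ P)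
    (hS : S.Nonempty) {f : α → ℝ} {M : ℝ} (hf : ∀ a ∈ S, f a = M) (hf' : ∀ a ∈ P, a ∉ S → f a < M)
    (p : α → Prop) [DecidablePred p] :
    Tendsto (fun γ : ℝ => (∑ a ∈ P with p a, Real.exp (γ * f a)) / ∑ a ∈ P, Real.exp (γ * f a))
      atTop (𝓝 ((#{a ∈ S | p a} : ℝ) / #S)) := by
  have key : ∀ Q ⊆ P, Tendsto (fun γ : ℝ => ∑ a ∈ Q, Real.exp (γ * (f a - M))) atTop
      (𝓝 (#{a ∈ Q | a ∈ S} : ℝ)) := by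
    intro Q hQ
    rw [Finset.card_filter, Nat.cast_sum]
    refine tendsto_finsetSum _ fun a ha => ?_
    by_cases haS : a ∈ S
    · simp [haS, hf a haS]
    · simp only [haS, if_false, Nat.cast_zero]
      exact Real.tendsto_exp_atBot.comp
        (tendsto_id.atTop_mul_const_of_neg (sub_neg.2 (hf' a (hQ ha) haS)))
  have h := (key _ (Finset.filter_subset p P)).div (key P subset_rfl) (by
    have : {a ∈ P | a ∈ S} = S := by ext a; simpa using fun h => hSP h
    rw [this]
    exact_mod_cast hS.card_ne_zero)
  convert h using 2 with γ
  · have hM : ∀ a, Real.exp (γ * (f a - M)) = Real.exp (γ * f a) * Real.exp (-(γ * M)) := by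
      intro a
      rw [← Real.exp_add]
      ring_nf
    simp only [hM, ← Finset.sum_mul, Pi.div_apply]
    rw [mul_div_mul_right _ _ (Real.exp_ne_zero _)]
  · congr 3
    · ext a
      have := @hSP a
      simp only [Finset.mem_filter]
      tauto
    · ext a
      simpa using fun h => hSP h

/-- The sum of `z - t` over `Λ` is strictly below its maximum unless `Λ` contains all entries above
the threshold `t` and none below it. -/
lemma sum_sub_lt_of_not_threshold {ι : Type*} [Fintype ι] [DecidableEq ι] (z : ι → ℝ) (t : ℝ)
    (Λ : Finset ι) (h : ¬ ((∀ j, t < z j → j ∈ Λ) ∧ ∀ j ∈ Λ, t ≤ z j)) :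
    ∑ j ∈ Λ, (z j - t) < ∑ j, max (z j - t) 0 := by
  have hsum : ∑ j ∈ Λ, (z j - t) = ∑ j, if j ∈ Λ then z j - t else 0 := by simp
  rw [hsum]
  refine Finset.sum_lt_sum (fun j _ => by split_ifs <;> simp) ?_
  rw [not_and_or] at h
  push Not at h
  rcases h with ⟨j, hj, hjΛ⟩ | ⟨j, hjΛ, hj⟩
  · exact ⟨j, Finset.mem_univ j, by simp [hjΛ, hj]⟩
  · exact ⟨j, Finset.mem_univ j, by simp [hjΛ, hj]⟩

lemma sum_sub_eq_of_threshold {ι : Type*} [Fintype ι] [DecidableEq ι] (z : ι → ℝ) (t : ℝ)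
    (Λ : Finset ι) (h₁ : ∀ j, t < z j → j ∈ Λ) (h₂ : ∀ j ∈ Λ, t ≤ z j) :
    ∑ j ∈ Λ, (z j - t) = ∑ j, max (z j - t) 0 := by
  have hsum : ∑ j ∈ Λ, (z j - t) = ∑ j, if j ∈ Λ then z j - t else 0 := by simp
  rw [hsum]
  refine Finset.sum_congr rfl fun j _ => ?_
  split_ifs with hj
  · simp [h₂ j hj]
  · simp [not_lt.1 fun h => hj (h₁ j h)]

/-- The `k`-element sets that contain all entries of `z` above the threshold `t` and none below. -/
noncomputable def thresholdSets {ι : Type*} [Fintype ι] [DecidableEq ι] (k : ℕ) (z : ι → ℝ)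
    (t : ℝ) : Finset (Finset ι) :=
  {Λ ∈ Finset.univ.powersetCard k | (∀ j, t < z j → j ∈ Λ) ∧ ∀ j ∈ Λ, t ≤ z j}

section ThresholdSets

variable {ι : Type*} [Fintype ι] [DecidableEq ι] {k : ℕ} {z : ι → ℝ} {t : ℝ}

lemma mem_thresholdSets {Λ : Finset ι} :
    Λ ∈ thresholdSets k z t ↔ #Λ = k ∧ (∀ j, t < z j → j ∈ Λ) ∧ ∀ j ∈ Λ, t ≤ z j := by
  simp [thresholdSets]

lemma thresholdSets_subset : thresholdSets k z t ⊆ Finset.univ.powersetCard k :=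
  Finset.filter_subset _ _

lemma thresholdSets_nonempty (hA : #{j | t < z j} ≤ k) (hC : k ≤ #{j | t ≤ z j}) :
    (thresholdSets k z t).Nonempty := by
  obtain ⟨Λ, h₁, h₂, h₃⟩ := Finset.exists_subsuperset_card_eq
    (Finset.monotone_filter_right Finset.univ fun j _ (h : t < z j) => h.le) hA hC
  exact ⟨Λ, mem_thresholdSets.2 ⟨h₃, fun j hj => h₁ (by simpa using hj),
    fun j hj => by simpa using h₂ hj⟩⟩

lemma card_thresholdSets_mem_le {i j : ι} (hi : z i = t) (hj : z j = t) :
    #{Λ ∈ thresholdSets k z t | i ∈ Λ} ≤ #{Λ ∈ thresholdSets k z t | j ∈ Λ} := by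
  have hz : ∀ l, z (Equiv.swap i j l) = z l := by
    intro l
    rw [Equiv.swap_apply_def]
    split_ifs <;> simp_all
  refine Finset.card_le_card_of_injOn (fun Λ => Λ.map (Equiv.swap i j).toEmbedding) ?_
    (Finset.map_injective _).injOn
  intro Λ hΛ
  simp only [Finset.coe_filter, Set.mem_ofPred_eq, mem_thresholdSets, Finset.card_map,
    Finset.mem_map_equiv, Equiv.symm_swap, Equiv.swap_apply_right] at hΛ ⊢
  obtain ⟨⟨hc, h₁, h₂⟩, hiΛ⟩ := hΛ
  exact ⟨⟨hc, fun l hl => h₁ _ (by rwa [hz]), fun l hl => hz l ▸ h₂ _ hl⟩, hiΛ⟩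

lemma card_thresholdSets_mem_mul {i : ι} (hi : z i = t) :
    #{Λ ∈ thresholdSets k z t | i ∈ Λ} * #{j | z j = t} =
      #(thresholdSets k z t) * (k - #{j | t < z j}) := by
  have hcount := Finset.sum_card_bipartiteAbove_eq_sum_card_bipartiteBelow
    (s := ({j | z j = t} : Finset ι)) (t := thresholdSets k z t) (fun j Λ => j ∈ Λ)
  have hleft : ∀ j ∈ ({j | z j = t} : Finset ι),
      #((thresholdSets k z t).bipartiteAbove (fun j Λ => j ∈ Λ) j) =
        #{Λ ∈ thresholdSets k z t | i ∈ Λ} := by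
    intro j hj
    have hj' : z j = t := by simpa using hj
    exact le_antisymm (card_thresholdSets_mem_le hj' hi) (card_thresholdSets_mem_le hi hj')
  have hright : ∀ Λ ∈ thresholdSets k z t,
      #(({j | z j = t} : Finset ι).bipartiteBelow (fun j Λ => j ∈ Λ) Λ) =
        k - #{j | t < z j} := by
    intro Λ hΛ
    obtain ⟨hc, h₁, h₂⟩ := mem_thresholdSets.1 hΛ
    have hsub : ({j | t < z j} : Finset ι) ⊆ Λ := fun j hj => h₁ j (by simpa using hj)
    rw [← hc, ← Finset.card_sdiff_of_subset hsub]
    congr 1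
    ext j
    simp only [Finset.bipartiteBelow, Finset.mem_filter, Finset.mem_univ, true_and,
      Finset.mem_sdiff, not_lt]
    exact ⟨fun h => ⟨h.2, h.1.le⟩, fun h => ⟨le_antisymm h.2 (h₂ j h.1), h.1⟩⟩
  rw [Finset.sum_congr rfl hleft, Finset.sum_congr rfl hright] at hcount
  simpa [mul_comm] using hcount

end ThresholdSets

lemma tendsto_thetaGSM_atTop_card {d k : ℕ} {z : Fin d → ℝ} {t : ℝ}
    (hS : (thresholdSets k z t).Nonempty) (i : Fin d) :
    Tendsto (fun γ : ℝ => thetaGSM k γ z i) atTop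
      (𝓝 ((#{Λ ∈ thresholdSets k z t | i ∈ Λ} : ℝ) / #(thresholdSets k z t))) := by
  have hsum : ∀ Λ : Finset (Fin d), #Λ = k → ∑ j ∈ Λ, z j = ∑ j ∈ Λ, (z j - t) + k * t := by
    rintro Λ rfl
    simp
  refine tendsto_sum_exp_div_sum_exp (M := ∑ j, max (z j - t) 0 + k * t)
    thresholdSets_subset hS ?_ ?_ _
  · intro Λ hΛ
    obtain ⟨hc, h₁, h₂⟩ := mem_thresholdSets.1 hΛ
    rw [hsum Λ hc, sum_sub_eq_of_threshold z t Λ h₁ h₂]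
  · intro Λ hΛ hΛS
    have hc : #Λ = k := by simpa using hΛ
    rw [hsum Λ hc]
    gcongr
    exact sum_sub_lt_of_not_threshold z t Λ fun h => hΛS (mem_thresholdSets.2 ⟨hc, h⟩)

/-- The limit of the soft-max weights for any threshold `t` separating the `k` largest entries. -/
lemma tendsto_thetaGSM_atTop {d k : ℕ} {z : Fin d → ℝ} {t : ℝ}
    (hA : #{j | t < z j} < k) (hC : k + #{j | z j < t} ≤ d) (i : Fin d) :
    Tendsto (fun γ : ℝ => thetaGSM k γ z i) atTop (𝓝
      (if t < z i then 1
       else if z i = t then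
         ((k : ℝ) - (Set.ncard {j : Fin d | t < z j} : ℝ)) /
           (Set.ncard {j : Fin d | z j = t} : ℝ)
       else 0)) := by
  have hcompl : #{j | z j < t} + #{j | t ≤ z j} = d := by
    have := Finset.card_filter_add_card_filter_not (s := (Finset.univ : Finset (Fin d)))
      (fun j => z j < t)
    simpa using this
  have hS : (thresholdSets k z t).Nonempty := thresholdSets_nonempty hA.le (by omega)
  have hS0 : (#(thresholdSets k z t) : ℝ) ≠ 0 := by exact_mod_cast hS.card_ne_zero
  convert tendsto_thetaGSM_atTop_card hS i using 2
  split_ifs with h₁ h₂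
  · rw [Finset.filter_true_of_mem fun Λ hΛ => (mem_thresholdSets.1 hΛ).2.1 i h₁, div_self hS0]
  · have hB : #{j | z j = t} ≠ 0 := Finset.card_ne_zero_of_mem (a := i) (by simpa using h₂)
    have hmul := card_thresholdSets_mem_mul (k := k) h₂
    rw [Set.ncard_eq_toFinset_card', Set.ncard_eq_toFinset_card', Set.toFinset_ofPred,
      Set.toFinset_ofPred, ← Nat.cast_sub hA.le, div_eq_div_iff (by exact_mod_cast hB) hS0]
    norm_cast
    rw [hmul, mul_comm]
  · rw [Finset.filter_false_of_mem fun Λ hΛ hi =>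
      h₁ (lt_of_le_of_ne ((mem_thresholdSets.1 hΛ).2.2 i hi) (Ne.symm h₂))]
    simp

lemma thetaGSM_neg_neg {d : ℕ} (k : ℕ) (γ : ℝ) (z : Fin d → ℝ) (i : Fin d) :
    thetaGSM k (-γ) (-z) i = thetaGSM k γ z i := by
  simp [thetaGSM]

/-- Limits of the generalized soft-max weights θ_{k,γ}(z) as γ → +∞ and
γ → −∞: with Λ_a, Λ_b as in the statement, θ^i tends to 1 on Λ_a, to
(k − |Λ_a|)/|Λ_b| on Λ_b, and to 0 elsewhere. -/
theorem stmt12 {d : ℕ} (k : ℕ) (hk : 0 < k) (hkd : k < d) (z : Fin d → ℝ) :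
    (∀ i : Fin d,
      Tendsto (fun γ : ℝ => thetaGSM k γ z i) atTop (nhds
        (if kthLargest z k < z i then 1
         else if z i = kthLargest z k then
           ((k : ℝ) - (Set.ncard {j : Fin d | kthLargest z k < z j} : ℝ)) /
             (Set.ncard {j : Fin d | z j = kthLargest z k} : ℝ)
         else 0))) ∧
    (∀ i : Fin d,
      Tendsto (fun γ : ℝ => thetaGSM k γ z i) atBot (nhds
        (if z i < kthLargest z (d - k + 1) then 1
         else if z i = kthLargest z (d - k + 1) then
           ((k : ℝ) - (Set.ncard {j : Fin d | z j < kthLargest z (d - k + 1)} : ℝ)) /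
             (Set.ncard {j : Fin d | z j = kthLargest z (d - k + 1)} : ℝ)
         else 0))) := by
  refine ⟨fun i => ?_, fun i => ?_⟩
  · refine tendsto_thetaGSM_atTop ?_ ?_ i
    · have := card_filter_sort_getD_lt z (n := d - k) (by omega)
      unfold kthLargest
      omega
    · have := card_filter_lt_sort_getD z (n := d - k) (by omega)
      unfold kthLargest
      omega
  · have hidx : d - (d - k + 1) = k - 1 := by omega
    have hlt := card_filter_lt_sort_getD z (n := k - 1) (by omega)
    have hgt := card_filter_sort_getD_lt z (n := k - 1) (by omega)
    rw [← hidx] at hlt hgt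
    change #{j | z j < kthLargest z (d - k + 1)} ≤ _ at hlt
    change #{j | kthLargest z (d - k + 1) < z j} ≤ _ at hgt
    have h := (tendsto_thetaGSM_atTop (k := k) (z := -z) (t := -kthLargest z (d - k + 1))
      (by simp only [Pi.neg_apply, neg_lt_neg_iff]; omega)
      (by simp only [Pi.neg_apply, neg_lt_neg_iff]; omega) i).comp tendsto_neg_atBot_atTop
    simpa only [Function.comp_def, thetaGSM_neg_neg, Pi.neg_apply, neg_lt_neg_iff, neg_inj] using h
end

section
/- Let z ∈ ℝ^d, let γ ∈ (0,∞), and let i ∈ {1,…,d}. Define s_{0,γ}(z) = 1 and, for 1 ≤ q ≤ d, s_{q,γ}(z) = Σ_{Λ⊆{1,…,d}, |Λ|=q} exp( γ ( Σ_{j∈Λ} z_j − Σ_{j=1}^q z_(j) ) ), and define c_{q,γ}^i(z) = exp(γ (z_i − z_(q))) · s_{q−1,γ}(z) / s_{q,γ}(z) for q = 1,…,d. Then q ↦ c_{q,γ}^i(z) is strictly increasing on {1,…,d}. -/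
open Finset Filter Topology

/-- s_{q,γ}(z) = Σ_{|Λ|=q} exp(γ (Σ_{j∈Λ} z_j − Σ_{j=1}^q z₍j₎)); for q = 0 the
only Λ is ∅ and the value is 1. -/
noncomputable def sGSM {d : ℕ} (γ : ℝ) (z : Fin d → ℝ) (q : ℕ) : ℝ :=
  ∑ Λ ∈ Finset.univ.powersetCard q,
    Real.exp (γ * ((∑ j ∈ Λ, z j) - ∑ j ∈ Finset.range q, kthLargest z (j + 1)))

/-- The `q`-th elementary symmetric sum of the weights `w` over the finite set `s`. -/
noncomputable def elemSymm {ι : Type*} (w : ι → ℝ) (s : Finset ι) (q : ℕ) : ℝ :=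
  ∑ Λ ∈ s.powersetCard q, ∏ j ∈ Λ, w j

section elemSymm

variable {ι : Type*} (w : ι → ℝ)

lemma elemSymm_zero (s : Finset ι) : elemSymm w s 0 = 1 := by
  simp [elemSymm]

lemma elemSymm_eq_zero {s : Finset ι} {q : ℕ} (h : #s < q) : elemSymm w s q = 0 := by
  simp [elemSymm, Finset.powersetCard_eq_empty.2 h]

lemma elemSymm_insert [DecidableEq ι] {a : ι} {s : Finset ι} (ha : a ∉ s) (q : ℕ) :
    elemSymm w (insert a s) (q + 1) = elemSymm w s (q + 1) + w a * elemSymm w s q := by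
  have notMem_of_mem {q : ℕ} : ∀ Λ ∈ s.powersetCard q, a ∉ Λ := fun Λ hΛ h =>
    ha ((Finset.mem_powersetCard.1 hΛ).1 h)
  unfold elemSymm
  rw [Finset.powersetCard_succ_insert ha, Finset.sum_union, Finset.sum_image, Finset.mul_sum]
  · congr 1
    exact Finset.sum_congr rfl fun Λ hΛ => Finset.prod_insert (notMem_of_mem Λ hΛ)
  · intro Λ hΛ Γ hΓ h
    rw [← Finset.erase_insert (notMem_of_mem Λ hΛ), ← Finset.erase_insert (notMem_of_mem Γ hΓ)]
    exact congrArg (Finset.erase · a) h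
  · rw [Finset.disjoint_left]
    intro Λ hΛ h
    obtain ⟨Γ, -, rfl⟩ := Finset.mem_image.1 h
    exact notMem_of_mem _ hΛ (Finset.mem_insert_self a Γ)

variable {w}

lemma elemSymm_nonneg (hw : ∀ j, 0 < w j) (s : Finset ι) (q : ℕ) : 0 ≤ elemSymm w s q :=
  Finset.sum_nonneg fun _ _ => Finset.prod_nonneg fun j _ => (hw j).le

lemma elemSymm_pos (hw : ∀ j, 0 < w j) {s : Finset ι} {q : ℕ} (h : q ≤ #s) :
    0 < elemSymm w s q :=
  Finset.sum_pos (fun _ _ => Finset.prod_pos fun j _ => hw j) (Finset.powersetCard_nonempty.2 h)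

/-- Elementary symmetric sums of positive weights are strictly log-concave. -/
lemma elemSymm_mul_lt_sq (hw : ∀ j, 0 < w j) (s : Finset ι) :
    ∀ k : ℕ, k + 1 ≤ #s →
      elemSymm w s k * elemSymm w s (k + 2) < elemSymm w s (k + 1) ^ 2 := by
  classical
  induction s using Finset.induction_on with
  | empty => intro k hk; simp at hk
  | insert a s ha ih =>
    intro k hk
    rw [Finset.card_insert_of_notMem ha] at hk
    have log_concave (k : ℕ) :
        elemSymm w s k * elemSymm w s (k + 2) ≤ elemSymm w s (k + 1) ^ 2 := by
      by_cases h : k + 1 ≤ #s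
      · exact (ih k h).le
      · rw [elemSymm_eq_zero w (show #s < k + 2 by omega), mul_zero]
        positivity
    have hwa := hw a
    rcases k with _ | k
    · have h := log_concave 0
      have hnonneg := elemSymm_nonneg hw s 1
      simp only [elemSymm_insert w ha, elemSymm_zero, zero_add] at h ⊢
      nlinarith [mul_nonneg hwa.le hnonneg, mul_pos hwa hwa]
    · have hlt := ih k (by omega)
      have hle := log_concave (k + 1)
      have hcross : elemSymm w s k * elemSymm w s (k + 3) ≤
          elemSymm w s (k + 1) * elemSymm w s (k + 2) := by
        by_cases h : k + 2 ≤ #s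
        · have hpos := mul_pos (elemSymm_pos hw (show k + 1 ≤ #s by omega)) (elemSymm_pos hw h)
          refine le_of_mul_le_mul_right ?_ hpos
          calc _ = (elemSymm w s k * elemSymm w s (k + 2)) *
                (elemSymm w s (k + 1) * elemSymm w s (k + 3)) := by ring
            _ ≤ elemSymm w s (k + 1) ^ 2 * elemSymm w s (k + 2) ^ 2 :=
              mul_le_mul hlt.le hle
                (mul_nonneg (elemSymm_nonneg hw s _) (elemSymm_nonneg hw s _)) (sq_nonneg _)
            _ = _ := by ring
        · rw [elemSymm_eq_zero w (show #s < k + 3 by omega), mul_zero]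
          exact mul_nonneg (elemSymm_nonneg hw s _) (elemSymm_nonneg hw s _)
      simp only [elemSymm_insert w ha]
      nlinarith [mul_pos (mul_pos hwa hwa) (sub_pos.2 hlt), mul_nonneg hwa.le (sub_nonneg.2 hcross)]

end elemSymm

lemma sGSM_eq_elemSymm_div {d : ℕ} (γ : ℝ) (z : Fin d → ℝ) (q : ℕ) :
    sGSM γ z q = elemSymm (fun j => Real.exp (γ * z j)) univ q /
      Real.exp (γ * ∑ j ∈ Finset.range q, kthLargest z (j + 1)) := by
  simp only [sGSM, elemSymm, Finset.sum_div, mul_sub, Real.exp_sub, Finset.mul_sum, Real.exp_sum]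

/-- The order statistics cancel in the ratio of consecutive `sGSM`. -/
lemma exp_mul_sGSM_div_sGSM {d : ℕ} (γ : ℝ) (z : Fin d → ℝ) (i : Fin d) (q : ℕ) :
    Real.exp (γ * (z i - kthLargest z (q + 1))) * sGSM γ z q / sGSM γ z (q + 1) =
      Real.exp (γ * z i) * (elemSymm (fun j => Real.exp (γ * z j)) univ q /
        elemSymm (fun j => Real.exp (γ * z j)) univ (q + 1)) := by
  simp only [sGSM_eq_elemSymm_div, Finset.sum_range_succ, mul_add, mul_sub, Real.exp_add,
    Real.exp_sub]
  field_simp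

/-- The quantities c_{q,γ}ⁱ(z) = exp(γ(zᵢ − z₍q₎)) s_{q−1,γ}(z)/s_{q,γ}(z) are
strictly increasing in q on {1,…,d}. -/
theorem stmt19 {d : ℕ} (hd : 1 ≤ d) (z : Fin d → ℝ) (γ : ℝ) (hγ : 0 < γ)
    (i : Fin d) :
    ∀ q : ℕ, 1 ≤ q → q + 1 ≤ d →
      Real.exp (γ * (z i - kthLargest z q)) * sGSM γ z (q - 1) / sGSM γ z q <
      Real.exp (γ * (z i - kthLargest z (q + 1))) * sGSM γ z q / sGSM γ z (q + 1) := by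
  intro q hq hqd
  obtain ⟨k, rfl⟩ := Nat.exists_eq_add_of_le' hq
  have hw (j : Fin d) : 0 < Real.exp (γ * z j) := Real.exp_pos _
  rw [Nat.add_sub_cancel, exp_mul_sGSM_div_sGSM, exp_mul_sGSM_div_sGSM]
  refine mul_lt_mul_of_pos_left ?_ (Real.exp_pos _)
  rw [div_lt_div_iff₀ (elemSymm_pos hw (by simp; omega)) (elemSymm_pos hw (by simp; omega)), ← sq]
  exact elemSymm_mul_lt_sq hw univ k (by simp; omega)
end
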